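/- arXiv:1905.12151 — 3 statements merged into one kernel-verified Lean document; each statement's English description precedes it below -/
import Mathlib

section
/- Every 2-regular graph on 24 vertices — that is, every simple graph on a 24-element vertex set in which each vertex has degree exactly 2 — is the leave of some maximum 2-(24,4,1) packing. Equivalently: for every simple graph G on a 24-element point set in which every vertex has degree 2, there exists a collection of 42 four-element subsets (blocks) of the point set such that every pair of distinct points lies in at most one block, and the pairs of points contained in no block are exactly the edges of G. -/
/-!
A 2-regular graph on 24 vertices is a disjoint union of cycles of lengths at least 3, so up to
isomorphism it is one of 110 graphs, one for each partition of 24 into parts of size at least 3.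
For each of these partitions `table` lists 42 blocks on the points `0, …, 23` whose leave is the
union of the cycles on consecutive intervals of points with the prescribed lengths.
`table_certified` checks the blocks by evaluation and `table_types` checks that no
partition is missing.

The reduction to these 110 graphs goes through permutations. `exists_orientation` orients `G`
along its cycles: it produces a permutation `σ` such that `v` and `w` are adjacent exactly when
`σ v = w` or `σ w = v`. Since `σ` has neither fixed points nor 2-cycles, its cycle type is a
partition of 24 into parts of size at least 3 (`three_le_cycleType`). The permutation `stdPerm 0 L`
that rotates consecutive intervals has any such cycle type `L` (`stdPerm_cycleType`), so it is
conjugate to `σ`, and the conjugating permutation carries the tabulated packing to one with leave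
`G` (`exists_packing_of_certificate`).

For the orientation, consider the permutation of the darts of `G` that moves a dart `(v, w)` to
`(w, x)` with `x` the neighbour of `w` other than `v`. Reversal of darts conjugates it to its
inverse, and no orbit contains a dart together with its reverse; selecting one orbit from each
pair of opposite orbits gives exactly one selected dart out of, and one into, each vertex.
-/

/-- A 2-(24,4,1) packing: a collection of 4-element blocks on 24 points such that
every pair of distinct points lies in at most one block. -/
def IsPacking (B : Finset (Finset (Fin 24))) : Prop :=
  (∀ b ∈ B, b.card = 4) ∧
  ∀ p q : Fin 24, p ≠ q → ∀ b₁ ∈ B, ∀ b₂ ∈ B,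
    p ∈ b₁ → q ∈ b₁ → p ∈ b₂ → q ∈ b₂ → b₁ = b₂

/-- Adjacency in the leave of a packing: the pair of distinct points is covered by no block. -/
def LeaveAdj (B : Finset (Finset (Fin 24))) (p q : Fin 24) : Prop :=
  p ≠ q ∧ ∀ b ∈ B, ¬ (p ∈ b ∧ q ∈ b)

/-- The leave of the packing `B` is a vertex-disjoint union of cycles whose lengths are
given by the list `L`, covering all 24 points. -/
def LeaveIsCycleType (B : Finset (Finset (Fin 24))) (L : List ℕ) : Prop :=
  ∃ f : (i : Fin L.length) → ZMod (L.get i) → Fin 24,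
    Function.Bijective (fun x : Σ i : Fin L.length, ZMod (L.get i) => f x.1 x.2) ∧
    ∀ p q : Fin 24, LeaveAdj B p q ↔
      ∃ i k, (p = f i k ∧ q = f i (k + 1)) ∨ (q = f i k ∧ p = f i (k + 1))

/-! ### Cycle types and certificates -/

/-- The successor of the point `i` when the points `o, o + 1, …` are cut into consecutive
intervals with the lengths in the list and each interval is turned into a directed cycle. -/
def cycleNext : ℕ → List ℕ → ℕ → ℕ
  | _, [], i => i
  | o, a :: t, i => if i < o + a then (if i + 1 < o + a then i + 1 else o) else cycleNext (o + a) t i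

/-- Membership of the point `i` in the block with bit mask `b`, written with the primitive
operations on `ℕ` that the kernel evaluates directly. -/
def hasPoint (i b : ℕ) : Bool := Nat.beq (Nat.land (Nat.shiftRight b i) 1) 1

/-- `k (l.filter f)`, in continuation-passing style, so that the filtered list is
evaluated once and not again at every use inside `k`. -/
def withFilter (f : ℕ → Bool) : List ℕ → (List ℕ → Bool) → Bool
  | [], k => k []
  | b :: t, k => bif f b then withFilter f t (fun r => k (b :: r)) else withFilter f t k

/-- The blocks in `l`, given as bit masks, form a decomposition into 4-sets of all pairs of
points below 24, except for the edges of the cycles described by `L`. -/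
def isCertificate (L l : List ℕ) : Bool :=
  Nat.beq l.length 42 &&
  l.all (fun b => Nat.beq ((List.range 24).countP fun i => hasPoint i b) 4) &&
  (List.range 24).all fun p => withFilter (hasPoint p) l fun l' => (List.range p).all fun q =>
    Nat.beq (l'.countP (hasPoint q))
      (bif Nat.beq (cycleNext 0 L p) q || Nat.beq (cycleNext 0 L q) p then 0 else 1)

/-- The non-decreasing lists of numbers at least `m` with sum `n`, and length at most the first
argument. -/
def partsFrom : ℕ → ℕ → ℕ → List (List ℕ)
  | 0, n, _ => if n = 0 then [[]] else []
  | k + 1, n, m => if n = 0 then [[]] else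
      (List.range' m (n + 1 - m)).flatMap fun a => (partsFrom k (n - a) a).map (a :: ·)

/-! ### The packings -/

set_option maxRecDepth 20000 in
/-- For each partition of 24 into parts of size at least 3, the blocks of a maximum packing whose
leave has cycles of these lengths on consecutive intervals of points. A block is encoded as the
sum of `2 ^ i` over its points `i`. The blocks were found by computer search. -/
def table : List (List ℕ × List ℕ) := [
  ([3, 3, 3, 3, 3, 3, 3, 3],
    [139524, 8914960, 69762, 5243912, 49217, 2359840, 16914, 34976, 1196064, 4235776, 1048721,
     3153922, 4196418, 4587648, 10249, 132176, 335888, 2234368, 280832, 655873, 2129940, 8396896,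
     533632, 1116164, 4198672, 8519690, 295938, 1053248, 2113672, 4259873, 524578, 4734980,
     8389252, 9470208, 5156, 66312, 561160, 8471552, 262220, 2098433, 2687040, 8654849]),
  ([3, 3, 3, 3, 3, 3, 6],
    [6276, 33044, 43016, 658, 73745, 140416, 1312784, 4464644, 5275776, 344192, 1056802, 4195408,
     533248, 2232336, 8388745, 2621600, 8929296, 10494016, 655428, 2115585, 8421920, 17444, 49218,
     67680, 2393088, 4720642, 9502724, 561153, 2097676, 8521984, 590856, 2162946, 8393730, 393226,
     1049857, 4264448, 266528, 1052744, 4210952, 262721, 1196544, 4325409]),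
  ([3, 3, 3, 3, 3, 4, 5],
    [8390674, 331904, 8553472, 16457, 8397568, 4718628, 9437320, 10489857, 8454212, 8667168, 4372,
     8354, 1053728, 2098308, 67617, 264204, 1187844, 2130208, 49668, 131680, 524929, 4198920,
     661504, 4229248, 36930, 147600, 1081361, 2228234, 1067264, 2107456, 565256, 4325633, 66824,
     271361, 2703360, 5505088, 786690, 4268048, 1114626, 2359824, 525392, 4211714]),
  ([3, 3, 3, 3, 3, 9],
    [132162, 1049729, 8389185, 1181712, 8519968, 9437196, 1122368, 4333569, 8922112, 10500, 41120,
     270864, 2105354, 135688, 1052706, 8392848, 180228, 1327360, 10504192, 2752640, 5276160,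
     8716290, 17026, 559106, 2163456, 4456580, 67720, 524836, 4194578, 4788224, 66580, 524553,
     4196448, 81953, 540752, 4211720, 294984, 2129937, 2360352, 38144, 268289, 2101316]),
  ([3, 3, 3, 3, 4, 4, 4],
    [10486786, 5243168, 649, 2132, 9249, 17154, 165120, 266274, 8388881, 8389216, 69896, 557216,
     84000, 532740, 2228260, 2361600, 2101392, 2129992, 2171392, 2637825, 8486916, 8919040,
     4198916, 4229121, 21568, 40978, 1183745, 1344000, 327745, 655888, 4333632, 4472848, 1115152,
     1572930, 4259970, 4719624, 133130, 263300, 1058944, 1064972, 8536192, 8658952]),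
  ([3, 3, 3, 3, 4, 8],
    [8481, 8683552, 4727296, 41026, 33412, 21024, 2360064, 9437697, 66128, 131594, 1081608,
     2129937, 690176, 4293632, 67842, 132161, 589860, 4325536, 1050720, 2098210, 524425, 4194580,
     344065, 8536320, 529664, 4200449, 2637888, 5259266, 4456520, 8912914, 266370, 8392772,
     1122432, 2236420, 1183760, 2166792, 1311748, 10487936, 272400, 8397832, 17552, 18444]),
  ([3, 3, 3, 3, 5, 7],
    [2114056, 11010112, 2098193, 18465, 5259328, 41025, 4180, 66626, 131680, 264264, 606212,
     8409090, 148608, 278800, 2101536, 2164864, 2236420, 2392066, 169984, 335904, 1048738,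
     4196612, 4751392, 9447424, 526354, 8389668, 1245200, 4461568, 1311236, 4325386, 8962, 32908,
     1082624, 4202640, 533512, 8421904, 655617, 8650881, 529024, 8454408, 1052681, 4260353]),
  ([3, 3, 3, 3, 6, 6],
    [9438209, 147744, 4718728, 2132, 2396160, 74242, 81929, 140416, 262289, 2098248, 565264,
     4264000, 1114384, 8396896, 328736, 2105601, 2689024, 4464644, 1058824, 8454276, 264450,
     2097700, 393736, 2113666, 1327168, 10616848, 1212420, 8411136, 4364, 34976, 5242914, 8913664,
     1053312, 8421386, 528417, 4228352, 655426, 4211216, 541700, 4327425, 5138, 33345]),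
  ([3, 3, 3, 3, 12],
    [4673, 66308, 1049668, 593922, 1087488, 9502848, 20752, 328720, 5242897, 266276, 1065504,
     4259936, 73737, 1179912, 2102280, 1318914, 2181120, 4329600, 278657, 4211714, 4458752,
     294984, 4719112, 8405004, 2186, 671808, 4235268, 10748416, 8848, 133140, 2097234, 8945680,
     164354, 2621572, 8398912, 33952, 526369, 8388898, 533760, 2130177, 8520705, 2236448]),
  ([3, 3, 3, 4, 4, 7],
    [10520576, 8964, 4211720, 4194450, 4263968, 1179713, 4849668, 5505280, 4196928, 4235265,
     329732, 561408, 2321, 32852, 2097292, 8388874, 141320, 1081864, 266249, 589896, 164992,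
     1067010, 294946, 526496, 2163968, 8409092, 197122, 1060992, 2232336, 9502736, 5186, 82049,
     147744, 1049636, 2375744, 8913921, 2097697, 8396896, 2629634, 8651392, 271376, 541200]),
  ([3, 3, 3, 4, 5, 6],
    [147473, 8458, 2367616, 8292, 566272, 1124352, 4206593, 8397328, 4196372, 8389665, 589953,
     1081488, 524370, 1048649, 263440, 2099457, 295425, 2166800, 4358152, 8470530, 4260928,
     8423488, 37124, 66336, 327692, 2129954, 4735232, 9568512, 4194946, 8392840, 659488, 1065476,
     282688, 2228800, 18592, 132228, 526856, 1053698, 395266, 2114568, 5505056, 11010052]),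
  ([3, 3, 3, 4, 11],
    [262217, 5324800, 657920, 2135040, 34849, 2097681, 73857, 9437441, 541697, 4329473, 66060,
     1050634, 20744, 4195464, 2236424, 8945672, 67856, 1049248, 4466688, 8667648, 18500, 4194882,
     41728, 10487936, 2113570, 4227092, 1212480, 2687040, 295042, 2359556, 132354, 528516,
     1057796, 8458242, 532498, 8519716, 328736, 1314832, 12384, 8389712, 147600, 4718880]),
  ([3, 3, 3, 5, 5, 5],
    [135328, 1049730, 4210722, 263204, 2228482, 4196496, 656392, 4228160, 4333569, 164368,
     4784132, 8398080, 2163728, 4457216, 8521732, 21505, 1196096, 5246984, 24596, 528656, 1081604,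
     18696, 1310737, 2101316, 652, 65825, 8388690, 70146, 8470656, 9437728, 1124352, 2638336,
     8687616, 2625, 327752, 10485769, 40970, 532576, 557185, 788482, 2132000, 2367616]),
  ([3, 3, 3, 5, 10],
    [8356, 524564, 4276228, 548866, 1327105, 8265, 8425984, 2752513, 2817, 5137, 4227105, 8454273,
     559168, 8913928, 593952, 4719232, 17696, 18576, 151560, 2114112, 266308, 1049100, 2130948,
     8521732, 131618, 2101378, 328208, 5247232, 295048, 9437280, 1180800, 2361376, 2162952,
     4325456, 66626, 4196362, 1124352, 4465664, 172288, 10493968, 1081362, 8651010]),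
  ([3, 3, 3, 6, 9],
    [135440, 1064978, 8389890, 66580, 528514, 4210952, 53312, 279584, 2102273, 606209, 4263968,
     4719680, 1090560, 2246656, 8655360, 132232, 1052684, 8405124, 5373953, 9044000, 9502784,
     164356, 1312896, 10493960, 139330, 1049376, 8390673, 585, 2148, 8353, 295169, 2129954,
     2359376, 559112, 2163328, 4464644, 76032, 533008, 4196866, 327690, 2621700, 4227216]),
  ([3, 3, 3, 7, 8],
    [2359456, 20752, 34888, 4333572, 83972, 8425476, 524436, 1048868, 263180, 2097732, 278593,
     2101258, 2245632, 4461056, 69761, 8405026, 1183808, 4734984, 529440, 1065600, 4259936,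
     8519816, 532546, 1056777, 66312, 8389712, 10784, 42112, 163873, 4196482, 131602, 4195585,
     657664, 5275664, 295170, 2099217, 1115138, 8913409, 335888, 10494208, 2719744, 9701376]),
  ([3, 3, 3, 15],
    [266370, 4202656, 8519714, 37152, 1179777, 4195346, 541824, 557570, 1065504, 66192, 526369,
     2113794, 1124, 32908, 1048650, 75778, 2424864, 10487936, 1119232, 2262016, 5277696, 2824,
     81985, 2621460, 280580, 2105920, 8978440, 133200, 2101257, 4260100, 135684, 4341768, 4722752,
     271368, 8683584, 9445380, 40977, 1310992, 8389889, 663808, 4456961, 8409104]),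
  ([3, 3, 4, 4, 4, 6],
    [286848, 1188096, 4326528, 1310792, 4522016, 5246992, 2361346, 4719106, 9469954, 8274, 65674,
     135202, 17666, 266497, 1115137, 4210753, 393732, 1050756, 4235268, 295952, 1065504, 4196616,
     5640, 33120, 83984, 69700, 35329, 540684, 2097428, 8389668, 2622528, 8978688, 10506240,
     561280, 2171392, 8521792, 655377, 2097313, 8396809, 534560, 2261000, 8389264]),
  ([3, 3, 4, 4, 5, 5],
    [2162724, 5406720, 657412, 1065120, 4456736, 8425476, 16652, 262292, 528418, 8390689, 33888,
     139808, 1050116, 4202564, 35088, 135304, 1052929, 4196482, 84480, 331840, 2629888, 10486912,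
     66818, 73857, 2099272, 2101776, 557696, 1320960, 4215808, 8520000, 40970, 132113, 1048658,
     4194825, 540737, 787464, 8413200, 8651266, 2244610, 2392065, 4784144, 9502728]),
  ([3, 3, 4, 4, 10],
    [4718602, 8651392, 147492, 337, 541760, 4327488, 266312, 8396866, 1081412, 2162784, 335876,
     8425504, 532768, 4198660, 1172, 2209, 263202, 8390668, 2621956, 5243424, 559120, 4260865,
     4472848, 9043969, 1313024, 10487040, 2392065, 9502736, 594048, 4235392, 20993, 139792,
     1056777, 2101266, 1065090, 2228360, 34312, 68098, 82184, 164098, 1184768, 2123776]),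
  ([3, 3, 4, 5, 9],
    [2162721, 8405004, 4227090, 1188864, 5129, 10276, 303232, 4719680, 34336, 4202753, 66692,
     2105416, 598018, 2360336, 8389890, 8397328, 688136, 5505028, 36932, 4196488, 327944, 2621956,
     131348, 1049098, 1097729, 4341792, 2132224, 4264448, 281088, 545024, 131713, 1048928, 133186,
     1052816, 266274, 526353, 8650817, 8913056, 82000, 2113666, 9504768, 10620928]),
  ([3, 3, 4, 6, 8],
    [4456482, 1114122, 2265088, 8912914, 5634, 35074, 147522, 2105474, 4196, 32929, 557576,
     8392968, 4722689, 8683524, 69776, 1081424, 1331200, 4300800, 264832, 4195648, 591936,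
     9438336, 655492, 10485825, 270408, 4210824, 132105, 2099212, 533536, 8407072, 2638080,
     8528384, 1179936, 2163232, 82948, 1058817, 2360336, 4327440, 327937, 5243396, 8468, 16913]),
  ([3, 3, 4, 7, 7],
    [10749952, 8462344, 4327432, 2689, 8388929, 5129, 262666, 2097292, 540936, 1081416, 43010,
     83972, 526432, 1050896, 294945, 2113553, 1245185, 4726785, 2236480, 4522240, 9504, 69712,
     589954, 1057284, 270480, 2163232, 263236, 2101506, 164100, 4210754, 132114, 4198436, 8912916,
     9437218, 147616, 4227600, 1331200, 2655232, 8406528, 8425600, 659968, 5244032]),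
  ([3, 3, 4, 14],
    [264288, 132384, 1057040, 528464, 2113556, 332, 8454784, 4227108, 4260880, 8552464, 2578,
     262289, 1376260, 8398852, 135684, 525444, 81985, 10485826, 1082432, 4333632, 2164992,
     8667392, 69666, 8912929, 598024, 9441288, 2654720, 4214912, 37121, 4718850, 1065504, 2105504,
     303106, 5244929, 673792, 2364416, 34952, 4456968, 9729, 1179778, 17418, 2228233]),
  ([3, 3, 5, 5, 8],
    [2105474, 164354, 327690, 11010049, 4169, 2228236, 5259520, 134145, 541192, 8421640, 1058824,
     4195464, 81937, 262433, 1049217, 4235265, 4849728, 9572352, 139536, 147616, 1049634, 4196370,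
     528642, 8405058, 2163968, 2377728, 2372, 21508, 558096, 8391200, 592000, 8659968, 532516,
     8388756, 74304, 299136, 1146884, 4456964, 2101776, 2130016, 1310800, 4263968]),
  ([3, 3, 5, 6, 7],
    [2359316, 8388746, 4325696, 73761, 271488, 2163328, 2238464, 4526080, 8460, 65618, 213000,
     4235266, 8921152, 9502976, 590852, 1057296, 136194, 4196872, 279042, 2130952, 528393,
     1050658, 1310792, 2621698, 8683552, 10502145, 264449, 2101344, 8391696, 8393220, 17696,
     33345, 18500, 37136, 559232, 1069184, 1212420, 4734992, 655904, 5243905, 131217, 4194468]),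
  ([3, 3, 5, 13],
    [86272, 133384, 4734978, 8651010, 17032, 40970, 2621452, 5242889, 328712, 8392776, 557328,
     4202784, 1048900, 2098433, 528513, 4260356, 527392, 4325456, 598080, 4232192, 4458624,
     9044480, 10260, 163873, 270849, 8421508, 18497, 148484, 266276, 8454161, 2392128, 9446400,
     1327120, 10502176, 1083904, 2236544, 1183746, 2164738, 1114272, 2101776, 610, 1170]),
  ([3, 3, 6, 6, 6],
    [83008, 4457728, 5312512, 147716, 1050882, 9453569, 74000, 1049744, 4734992, 6164, 393233,
     8388690, 2130448, 18952, 1212424, 10486024, 8521760, 656386, 4204545, 8454276, 2426880,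
     4325952, 8426496, 559232, 2236544, 8921600, 9228, 589833, 4194442, 66082, 2098209, 4227108,
     4737, 303106, 2621508, 278688, 528672, 1056864, 33089, 1311236, 2117634, 266312]),
  ([3, 3, 6, 12],
    [33289, 5275712, 82496, 2363456, 140544, 2129956, 2194, 11010560, 2170882, 2244624, 2098312,
     2099457, 565376, 8554496, 37136, 295938, 8289, 131148, 525392, 8388930, 659457, 8658952,
     540706, 8454164, 1180162, 4203024, 1310737, 4198410, 1058820, 4325536, 1065224, 4260865,
     21508, 327968, 4718852, 9438240, 6688, 262788, 1118336, 4474880, 591880, 8405121]),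
  ([3, 3, 7, 11],
    [65673, 9715712, 168448, 532800, 2097676, 4198410, 1187848, 8945672, 17480, 264456, 1118464,
     8454720, 1049232, 8392864, 1082370, 8521732, 5242948, 10486018, 1050657, 8389649, 2228289,
     4227329, 270849, 544769, 34896, 132384, 16660, 262242, 13316, 526850, 147586, 295044, 73746,
     589860, 2181120, 4523008, 2622592, 4204672, 2363408, 4211232, 2138144, 4849680]),
  ([3, 3, 8, 10],
    [2162705, 8466, 5406720, 4628, 656400, 1312784, 4210768, 8421520, 2139136, 4262144, 557068,
     4456484, 35330, 4199426, 36960, 4194952, 295169, 4726785, 545024, 8659456, 331784, 2621984,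
     279680, 8915008, 589954, 2359362, 1114688, 2232448, 147969, 9441281, 1097, 2209, 131396,
     1056900, 141320, 1049888, 2115588, 8455172, 90144, 10486024, 1064970, 8519714]),
  ([3, 3, 9, 9],
    [2695168, 4522112, 4752384, 132232, 1056928, 8397840, 41473, 263233, 2101377, 32916, 270348,
     2098212, 141314, 1049858, 8405122, 87040, 526976, 4202816, 2392066, 65618, 528394, 4194850,
     1116164, 4341764, 8913156, 4676, 655456, 5246992, 8454664, 65825, 540689, 4196361, 1081416,
     2228752, 8654880, 51232, 264464, 2113800, 168192, 1327616, 10487872, 9568257]),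
  ([3, 3, 18],
    [1056840, 4456712, 4202529, 4229136, 10493968, 131593, 524433, 87040, 2360321, 8454401, 36929,
     1067009, 16522, 528396, 2164744, 8422408, 4341824, 5247488, 4259972, 4719618, 140416, 598528,
     41218, 272388, 2785280, 8391296, 2101408, 8929312, 2097730, 9568260, 2113796, 8654850, 1108,
     1114130, 33316, 133154, 327776, 1049888, 526656, 1343616, 135440, 279056]),
  ([3, 4, 4, 4, 4, 5],
    [1182208, 1319936, 1069058, 2631680, 67842, 41090, 786442, 2098194, 4194850, 8519746, 8516,
     73761, 4333576, 8397328, 1048620, 1048657, 5308544, 9470208, 4197440, 8652832, 2196, 34825,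
     17672, 344080, 136193, 266756, 558112, 2359488, 49728, 147616, 593984, 2101536, 4231184,
     8392840, 655632, 2163208, 524929, 2260996, 4734980, 10502145, 4456705, 8455172]),
  ([3, 4, 4, 4, 9],
    [295432, 2132000, 2367616, 75784, 524456, 4196992, 8740, 133380, 1052684, 8388756, 557124,
     2179076, 4457476, 65730, 527362, 4210698, 1196160, 8520712, 9439296, 36993, 264209, 2097417,
     50192, 278848, 2102336, 172034, 1310754, 10486274, 2752528, 5275904, 8720384, 4370, 66848,
     545280, 4202576, 1114640, 4329504, 8921344, 131649, 1057793, 8405025, 4784129]),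
  ([3, 4, 4, 5, 8],
    [4489218, 1146881, 8945668, 2246656, 167944, 2138128, 33440, 34112, 1179908, 2162820, 655394,
     10485826, 2621960, 8520720, 2359584, 4325568, 139777, 2102273, 540737, 8390689, 262281,
     4194577, 526480, 8405256, 594176, 9445504, 4727808, 8655360, 10498, 20610, 4180, 8236,
     335936, 5247008, 82976, 1051200, 66066, 1049610, 265220, 4211204, 1327120, 4261896]),
  ([3, 4, 4, 6, 7],
    [4719680, 8651024, 131210, 37408, 2621698, 5242898, 282626, 8429570, 3106, 66114, 557073,
     4198660, 594048, 4229128, 136208, 164160, 1344512, 10489920, 1052681, 2130052, 1059072,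
     2179088, 1065152, 2106376, 2132, 66817, 270401, 8406020, 1180164, 2228257, 673792, 4399104,
     532516, 4211201, 327692, 8390785, 2361856, 9502752, 4456608, 8913416, 8848, 16680]),
  ([3, 4, 4, 13],
    [4526080, 688130, 2105504, 1065480, 132116, 131393, 2232832, 4333576, 149632, 9568288,
     1085444, 4734980, 2092, 8389252, 270596, 2162756, 528528, 4228128, 295048, 590368, 278561,
     1114241, 4386, 4194498, 5129, 4194833, 5245184, 8409152, 264706, 8454154, 41536, 2621704,
     527424, 8421648, 2131969, 8921089, 75792, 10748928, 1057794, 2113554, 83200, 1310800]),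
  ([3, 4, 5, 5, 7],
    [672256, 9441408, 295938, 76032, 5243138, 10493954, 2570, 81986, 135186, 524450, 1329152,
     8716800, 1114152, 8390736, 1049617, 8421412, 1049156, 8405001, 1220608, 8914176, 2113808,
     4203040, 21536, 33424, 2101761, 4210820, 262433, 270356, 2230304, 4784144, 131340, 532545,
     196737, 530436, 2654216, 4326464, 2359488, 4460552, 9352, 37184, 2163716, 4229121]),
  ([3, 4, 5, 6, 6],
    [2359425, 9437314, 4720896, 36996, 524960, 4195520, 82064, 139400, 541700, 4203012, 5275664,
     8917000, 2687040, 4587552, 688129, 4263937, 532498, 4210698, 1114632, 8520720, 1289, 2577,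
     296968, 2101520, 262228, 2097196, 1181700, 8454404, 336896, 2245120, 67618, 131394, 1053728,
     8421952, 22592, 41248, 1056833, 8405025, 1327360, 10496000, 266754, 2130946]),
  ([3, 4, 5, 12],
    [1105, 148488, 9438240, 2593, 528393, 270376, 1130497, 8552449, 2359425, 4202753, 41988,
     328706, 2102528, 4719744, 2162724, 4227106, 20640, 655648, 2099210, 4194828, 1081608,
     8454280, 33472, 67904, 2654224, 4263952, 301056, 598528, 5376000, 10502656, 2236480, 4472896,
     135682, 542724, 1052740, 8912962, 16658, 131220, 1311248, 8398864, 1056898, 8651012]),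
  ([3, 4, 6, 11],
    [327720, 1196036, 133378, 1232, 688129, 2109952, 4329536, 8520208, 140320, 2228360, 33292,
     528420, 4457476, 8454276, 10260, 2097476, 4210976, 9439240, 4726792, 10518560, 2593, 4361,
     17418, 1048738, 4229248, 8914176, 270465, 2163713, 541312, 1086464, 295184, 591936, 41026,
     2621458, 4260354, 8654850, 5242897, 8405057, 86032, 1311296, 1122560, 2377728]),
  ([3, 4, 7, 10],
    [594048, 2121732, 10497, 1089538, 4268064, 8921104, 139784, 271424, 66572, 524868, 542752,
     2162960, 4751368, 9502784, 68098, 525570, 344065, 2752513, 20744, 2099392, 4325696, 8652808,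
     16466, 2097194, 36929, 1048713, 4460546, 8519810, 1197056, 2392576, 4211328, 10490880,
     4195345, 8389153, 5244932, 8421636, 165904, 1311008, 135204, 262292, 33952, 1053200]),
  ([3, 4, 8, 9],
    [4227330, 21506, 4740, 9568260, 300, 8392961, 2172928, 8388690, 270608, 526656, 1115392,
     2244864, 565252, 4458500, 81988, 2098196, 8397832, 8407072, 8978560, 10748416, 327690,
     2621474, 2134024, 4263968, 659472, 1314880, 66065, 2097345, 311297, 4719617, 263328, 541192,
     164928, 5259280, 34960, 4203072, 1081888, 4325512, 133634, 1056898, 139297, 1050633]),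
  ([3, 4, 17],
    [270465, 2098241, 1050641, 528514, 147474, 212, 8388904, 4194882, 4210945, 8520193, 69641,
     557089, 37392, 4784144, 9488, 10747920, 656388, 2117636, 2623744, 9442304, 533000, 4460576,
     135488, 8929344, 2163328, 4228224, 263178, 2105378, 82976, 2261000, 1081602, 8456194, 327940,
     8429572, 297024, 1122368, 1327616, 4335616, 2596, 5242892, 18568, 1179808]),
  ([3, 5, 5, 5, 6],
    [8457, 2363904, 4866048, 9437328, 393488, 533120, 1183752, 2113920, 4206608, 8405512, 2578,
     5252, 16468, 86018, 131234, 164356, 279553, 589841, 1049153, 2230273, 4227201, 8392737,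
     329856, 561216, 1067040, 2130960, 4260384, 8520768, 294952, 525600, 1123328, 2162760,
     4196672, 8431616, 270402, 526348, 1081602, 2105380, 4195338, 8454404, 5505028, 11010050]),
  ([3, 5, 5, 11],
    [2621760, 1050641, 9568260, 74368, 4460576, 1049610, 1057056, 1118272, 1327616, 5275776,
     2359425, 4719105, 143361, 8454177, 17473, 33033, 270408, 4261120, 327698, 4204546, 4341768,
     8684544, 264452, 4194388, 131458, 8389186, 165952, 8405264, 656416, 10489864, 2228752,
     8915072, 589836, 2106372, 565264, 2181120, 544770, 2129954, 2600, 5264, 16548, 37380]),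
  ([3, 5, 6, 10],
    [2162721, 11010052, 344066, 2099458, 4644, 5242914, 163920, 74756, 2117648, 2359872, 2138120,
     2229376, 36994, 131594, 525378, 8396818, 149508, 295172, 1048652, 4194452, 559136, 8519968,
     17448, 270496, 1183745, 4227585, 4857856, 9470976, 1312784, 4211008, 1073664, 4461568,
     1114496, 4261896, 590352, 8458304, 1297, 10305, 528648, 8391296, 540801, 8650761]),
  ([3, 5, 7, 9],
    [4341776, 53760, 2392080, 8454161, 16425, 41217, 263233, 2099329, 1180161, 4722689, 2580,
     5138, 524688, 1056848, 1329152, 2638848, 82050, 8405060, 135488, 4203136, 266400, 2097736,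
     590368, 9441288, 2166788, 8651266, 4261952, 8520832, 557122, 1081476, 1115392, 8923136,
     655372, 5242914, 2314, 9252, 165920, 4228104, 335880, 10486048, 2236418, 4456708]),
  ([3, 5, 8, 8],
    [1179681, 18512, 2162724, 33826, 4210728, 8390816, 270624, 528928, 2316, 17028, 1130498,
     2230274, 148736, 1083904, 4458497, 8929281, 600064, 2379776, 688136, 1311872, 4719620,
     8683524, 328208, 2621760, 262218, 524434, 4203010, 8392962, 5243152, 8520256, 65921, 2097673,
     139284, 1052740, 4329600, 9445384, 70664, 2138240, 9281, 36881, 4292672, 10486800]),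
  ([3, 5, 16],
    [344066, 4195586, 163858, 2099220, 1052932, 65809, 8389160, 598020, 1115168, 4263944, 2163328,
     8456256, 10754, 11010050, 4258, 1048650, 33804, 4325412, 262724, 8405124, 4751872, 8528896,
     21008, 9699344, 1180161, 8425473, 2364416, 5261312, 659520, 1089664, 17473, 4456577, 525456,
     4202576, 133504, 2130240, 526345, 2105377, 270600, 540960, 296992, 2244616]),
  ([3, 6, 6, 9],
    [1180736, 8523792, 9453824, 53256, 267296, 2114688, 671748, 5246980, 8455172, 69761, 525321,
     4210721, 344080, 2625600, 4228352, 4866, 9234, 18498, 337, 1114146, 4325386, 8913026,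
     2392066, 592128, 4268096, 4719120, 565280, 2163208, 4458624, 33348, 270596, 2099220, 1081488,
     2228512, 8650824, 165889, 1311233, 10493953, 172, 139904, 1058824, 8391200]),
  ([3, 6, 7, 8],
    [8684544, 804, 18946, 4719105, 262800, 8389192, 1184256, 2171392, 2359362, 9437314, 266497,
     8396833, 4466688, 8933376, 278540, 8390676, 1376288, 10617088, 1050689, 2113665, 592128,
     4341792, 1065232, 2099240, 83008, 166016, 98321, 132105, 1057796, 2134020, 655428, 4259972,
     69642, 139282, 5280, 41280, 532616, 4198480, 2622480, 5275656, 557090, 4195586]),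
  ([3, 6, 15],
    [1085568, 1180680, 4228128, 4329473, 264232, 2105480, 8454304, 657, 16457, 524577, 43009,
     1376257, 10486785, 279680, 1057312, 8945672, 69644, 2228260, 4196484, 20514, 655490, 4194826,
     164608, 529472, 5259280, 541188, 2363904, 4792320, 8538112, 139344, 4456768, 8392976, 9476,
     294932, 9437252, 66578, 1050882, 2129986, 68160, 2179328, 2623504, 8658946]),
  ([3, 7, 7, 7],
    [17922, 262689, 2375684, 213024, 1312000, 2105872, 2098248, 2132000, 4719648, 4388, 2228354,
     8397825, 8234, 164868, 2621697, 5264, 9437344, 10555392, 133384, 663616, 4235520, 336000,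
     1184256, 8405264, 65858, 1058820, 4325393, 589844, 1081362, 1114121, 264272, 4262400,
     5259328, 36929, 4194444, 8914946, 544776, 557696, 8683528, 18561, 4460546, 8389188]),
  ([3, 7, 14],
    [1056808, 132672, 264212, 4227090, 2641920, 8454161, 17040, 2097488, 533520, 1183760, 1114628,
     8396868, 147492, 2098188, 557188, 4198660, 1081409, 4203009, 34080, 4325512, 5249, 655617,
     278537, 2099233, 4784160, 8425480, 2392576, 4212800, 174080, 5506048, 4642, 524362, 67848,
     8650912, 82946, 10616834, 270594, 1050754, 2171008, 9453824, 331840, 8915456]),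
  ([3, 8, 13],
    [18945, 4784129, 8421409, 524834, 1316, 1311236, 524428, 2228304, 2179076, 4327428, 40980,
     8392772, 4227648, 8454672, 139784, 2101888, 1196064, 2361376, 69672, 4202656, 136193,
     2105601, 2655232, 9044224, 534592, 544784, 163970, 10485770, 262217, 1048721, 68736, 4210952,
     1083400, 8667264, 2322, 17474, 1114432, 4457488, 299264, 9446400, 335874, 5246978]),
  ([3, 9, 12],
    [172, 1059072, 2396160, 540752, 4722692, 10502148, 33092, 264212, 139780, 1115140, 6720,
     2098448, 69650, 2228289, 1069184, 2629640, 5129, 2097794, 135456, 2164768, 4343808, 8978688,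
     4456705, 8423426, 16650, 526465, 279584, 557600, 82433, 656386, 336000, 1212424, 4259912,
     8519824, 4202530, 9437217, 40977, 1310786, 4228224, 8651272, 5243408, 8397888]),
  ([3, 10, 11],
    [8390689, 1097, 590081, 4202754, 8388876, 1081354, 10502146, 4752, 8683648, 9568768, 8458304,
     8913936, 131154, 267266, 65698, 526850, 279041, 2228353, 40977, 5246977, 2105920, 4211840,
     532616, 4260360, 33316, 1050756, 337920, 4849696, 1130512, 2658304, 540740, 2163716, 143364,
     4456468, 165120, 1311040, 149512, 2359336, 1057824, 4229184, 20768, 2099472]),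
  ([3, 21],
    [139344, 1058824, 1311808, 329856, 2099728, 8667152, 133156, 266252, 525332, 41092, 2097476,
     5259268, 8454660, 270593, 1081361, 4196417, 18690, 2392066, 4194450, 69904, 4456992, 8947712,
     532994, 1114146, 8392770, 33352, 4269056, 9568512, 34080, 4362240, 4718856, 606272, 1053312,
     10493984, 147969, 2162697, 8389761, 16552, 2118656, 2752640, 132106, 528417]),
  ([4, 4, 4, 4, 4, 4],
    [262308, 333824, 4214816, 66600, 2101384, 2376704, 73857, 82496, 1589376, 18442, 4195712,
     10551300, 16405, 133760, 5341184, 65810, 8421506, 8536320, 1058820, 4196417, 4719108, 4420,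
     4464642, 8914976, 164868, 2131984, 4325400, 1310984, 2097698, 8393729, 295425, 1053200,
     1179681, 1049666, 2621697, 8397320, 41248, 659458, 8650832, 533520, 557128, 2236480]),
  ([4, 4, 4, 4, 8],
    [2400256, 4345856, 2752544, 5505088, 264212, 2098312, 278538, 2101253, 2163008, 8651296,
     266624, 2114064, 328705, 10487810, 542784, 1053728, 72192, 8406272, 4178, 16545, 1130500,
     8917000, 9284, 10280, 164880, 4229248, 1181697, 4719618, 131656, 4194596, 4259864, 8519812,
     139522, 4203009, 598144, 9445392, 557572, 1081608, 524561, 1049218, 98338, 8421441]),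
  ([4, 4, 4, 5, 7],
    [4866048, 8691712, 598017, 4231176, 559168, 4203648, 1058820, 2130946, 139808, 164112, 8514,
     33412, 1081377, 2105368, 524818, 4194596, 5505026, 11010052, 529664, 4262400, 524456,
     4194385, 132101, 133130, 1183808, 2293888, 2359872, 9437568, 1065480, 2113793, 1115152,
     2103328, 279584, 8407056, 266260, 8454178, 327944, 8393217, 264321, 8389704, 20610, 81988]),
  ([4, 4, 4, 6, 6],
    [147536, 2359456, 36874, 4718597, 75008, 9439744, 10308, 66065, 1049634, 8389000, 5249, 33060,
     524872, 4196370, 528656, 559232, 4198944, 4228160, 17026, 133160, 263188, 2097473, 280577,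
     393474, 2114568, 2228740, 303616, 2168832, 5259520, 9044992, 1212417, 2629634, 4521992,
     8409092, 606240, 1314880, 4333696, 10518544, 1056792, 1114244, 8396833, 8454210]),
  ([4, 4, 4, 12],
    [10816, 133125, 2097233, 73748, 1180176, 2101764, 557316, 8422016, 8912920, 34834, 524833,
     8389700, 279568, 4210724, 4456962, 82440, 1310852, 4198672, 16769, 262472, 4196488, 2639872,
     4358208, 8658945, 2392096, 4727808, 8536066, 659584, 1089544, 10551552, 37889, 589890,
     9439264, 333824, 1069120, 5308417, 4138, 66720, 1049858, 139552, 2105474, 2229256]),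
  ([4, 4, 5, 5, 6],
    [8453, 67594, 9470976, 152064, 1049112, 8405128, 1056802, 8388930, 2375682, 4719106, 5138,
     163970, 1051008, 8462352, 1130497, 8391169, 1314820, 9043972, 5374016, 10489888, 395280,
     594048, 36929, 132129, 2228488, 4206600, 2621457, 4456577, 676, 16468, 2106496, 4227344,
     2163264, 4212768, 327968, 534592, 303616, 541952, 2131972, 4260868, 263240, 557096]),
  ([4, 4, 5, 11],
    [172096, 33952, 8651792, 4751376, 83008, 2640, 528449, 4194632, 1310788, 10485826, 35076,
     37378, 2392065, 9469960, 9221, 132106, 2622720, 5248000, 12312, 131345, 1064978, 2162708,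
     331808, 8405280, 1122560, 2248704, 262530, 8392836, 280584, 8454657, 589960, 4210817, 541188,
     4261890, 532514, 4325412, 1050657, 2097704, 4465152, 9046016, 1180288, 2107520]),
  ([4, 4, 6, 10],
    [4642, 2228360, 4800512, 8423680, 1310788, 9233, 524674, 526376, 558084, 8921152, 659457,
     2621968, 2396160, 9568768, 172034, 10486816, 131364, 2099266, 2170884, 4326464, 149520,
     2113793, 17028, 20552, 65872, 4196357, 33345, 8392724, 286752, 1065986, 330240, 5247232,
     263432, 1058944, 1081368, 8650881, 4227232, 8454154, 1114145, 4456466, 70784, 4203016]),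
  ([4, 4, 7, 9],
    [688136, 132354, 131589, 18952, 9437698, 327690, 1196096, 8521760, 2232336, 4333696, 32930,
     524370, 2107394, 4214786, 2359936, 4260368, 37440, 533024, 2130948, 4718852, 49169, 526465,
     1089792, 8918016, 2703360, 4491264, 67904, 279584, 1050644, 8405124, 69668, 270404, 1115264,
     8651024, 1314817, 8462337, 5242920, 10485832, 2097441, 4195393, 4488, 9240]),
  ([4, 4, 8, 8],
    [20800, 17568, 42000, 4326464, 2359376, 18960, 2179073, 8667144, 671746, 5259268, 1311745,
     2622472, 70660, 8389890, 4259858, 8519700, 524561, 1052696, 586, 2117, 622656, 9445440,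
     532612, 1081474, 262436, 2101282, 272386, 2130436, 2236672, 4493312, 328320, 10487936, 73768,
     8421409, 1116416, 8917504, 1180192, 4720672, 135297, 4194696, 165896, 4203009]),
  ([4, 4, 16],
    [1315840, 4276480, 131589, 2105354, 526416, 8421536, 558081, 4229128, 8652804, 8929282,
     2246656, 2392576, 4727296, 8528896, 17476, 278568, 4195458, 4456465, 1304, 20609, 327746,
     5242916, 270720, 1065488, 2163744, 4329536, 10273, 163858, 2621572, 8389192, 4642, 73748,
     1179784, 2097473, 68224, 655648, 1089600, 10489872, 37124, 593928, 1050882, 9502721]),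
  ([4, 5, 5, 5, 5],
    [10384, 4866048, 1098, 1114117, 2134272, 8651296, 66368, 1053728, 2425856, 9470016, 139329,
     525332, 1065090, 4261896, 594048, 788544, 1181952, 8520832, 90144, 2113616, 4236288, 5243408,
     17665, 1318920, 4198468, 8454162, 135682, 295044, 524584, 10487809, 18948, 163864, 2629634,
     4194465, 34850, 557569, 2097800, 2228260, 266257, 4456706, 8397060, 8409096]),
  ([4, 5, 5, 10],
    [1105, 4719620, 1066, 147492, 2593, 8650757, 1066240, 2229376, 304128, 8459264, 1376288,
     10518560, 528544, 4202784, 82049, 164097, 2629633, 5246977, 26632, 135688, 36932, 73748,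
     1049220, 2099460, 266498, 8396930, 1187904, 2117648, 2359368, 9437208, 1083394, 2163202,
     590088, 4227208, 4473344, 9046016, 540738, 4325394, 264336, 8389440, 557584, 4261952]),
  ([4, 5, 6, 9],
    [4456472, 9234, 9568264, 1048597, 1048866, 2621450, 41000, 66824, 4680, 18568, 1098752,
     1122816, 1314944, 5244992, 296962, 4263938, 131714, 8405058, 163920, 8454288, 544784,
     2099728, 591904, 2134272, 136193, 8398849, 133380, 8392740, 2244640, 8913664, 262689,
     4210945, 4857856, 10748928, 525380, 2105476, 270656, 4195488, 557185, 2162753, 344068,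
     4227588]),
  ([4, 5, 7, 8],
    [33802, 18752, 9437189, 590464, 2162754, 4718856, 69656, 532514, 1049346, 8389192, 133138,
     278568, 1187848, 8654850, 2099336, 4210818, 1131520, 8947712, 5507072, 10633216, 1081424,
     8389920, 1052832, 8396944, 132228, 295041, 168192, 271424, 327940, 655425, 2105601, 4198468,
     2626560, 4300800, 67617, 540692, 10756, 20993, 2359824, 4325920, 2129956, 4195345]),
  ([4, 5, 15],
    [10649600, 4784144, 9504, 1327616, 532994, 541697, 655496, 2621508, 559360, 8917024, 136194,
     2107393, 2163720, 4333572, 1181728, 2363648, 147776, 2097824, 131601, 2113554, 66308,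
     4210728, 327714, 5243137, 32805, 8388874, 1081410, 8650881, 69697, 4196482, 2632, 20612,
     4231680, 8472576, 1122432, 4457536, 33936, 8396880, 264212, 1052696, 303112, 9438212]),
  ([4, 6, 6, 8],
    [2228229, 8913040, 5242890, 336896, 1066112, 4235280, 1297, 8833, 1181712, 4329600, 1056836,
     4195364, 69652, 264324, 540932, 8421892, 1053216, 4196672, 4784129, 9699329, 1147136,
     4473344, 20545, 34849, 2113554, 2130056, 65698, 262232, 2163264, 2359584, 83976, 299010,
     688192, 8536096, 532520, 8389698, 132616, 139522, 526850, 8392968, 2626560, 10496000]),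
  ([4, 6, 7, 7],
    [8454288, 528520, 132226, 2113554, 344, 1056773, 264736, 4227082, 41120, 5243520, 18561,
     2359428, 1083408, 4464656, 135188, 525329, 344072, 10487816, 9736, 1179688, 1118272, 8921344,
     10306, 1310978, 2301952, 9454592, 590338, 8392738, 2654272, 4215040, 164097, 4195396, 300032,
     4851712, 4259873, 8421892, 148032, 2098464, 67844, 8650817, 540708, 2101761]),
  ([4, 6, 14],
    [8982528, 2377728, 1057344, 4359168, 67904, 8651392, 2130464, 4210768, 67074, 8519748, 147976,
     2098241, 557122, 4198916, 266312, 526849, 37136, 4718752, 540932, 2101378, 1070080, 2760704,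
     135201, 525336, 82049, 10486024, 9348, 1179906, 133264, 263456, 1081480, 4202753, 5570560,
     8431616, 270354, 1050660, 73768, 9437201, 294917, 4196362, 2162708, 8405026]),
  ([4, 7, 13],
    [4329728, 2662400, 328768, 1065600, 1118224, 4472864, 299016, 4784129, 81930, 1310725, 270480,
     2163232, 264706, 8454276, 76032, 10748160, 528960, 4228224, 2117636, 5251074, 4257, 4194840,
     4196420, 8393730, 164356, 655490, 9252, 2097234, 2099336, 8397313, 33058, 524564, 139336,
     2229249, 543744, 9470016, 1181728, 8536080, 16705, 1049864, 34833, 8912936]),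
  ([4, 8, 12],
    [4200449, 133440, 1067012, 329856, 8391200, 534536, 2131970, 8388746, 131205, 9076736,
     10493956, 8389649, 8667392, 9502784, 540705, 1081857, 73985, 2359361, 37024, 4719232,
     1057920, 2113680, 270370, 2163208, 139792, 2229280, 2625792, 4235328, 266756, 4259876, 16962,
     1048872, 87040, 5505040, 33044, 525380, 295944, 589842, 1183746, 4341768, 4184, 4195586]),
  ([4, 9, 11],
    [1061888, 541200, 4196640, 10780672, 36897, 263426, 278568, 557316, 4228104, 4460548, 4792320,
     5390336, 4194449, 4194882, 164480, 327760, 43072, 1312896, 270849, 1081362, 2101768, 8389652,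
     68100, 133144, 2105616, 9437728, 8330, 1048645, 2113668, 8912968, 2229312, 8458368, 2162722,
     8519937, 2623489, 8407042, 82945, 659458, 20800, 525472, 139300, 1114376]),
  ([4, 10, 10],
    [4329600, 8652864, 1081872, 8458, 540677, 2163744, 16720, 535040, 688384, 5267456, 73793,
     148488, 2099457, 4718632, 18592, 529472, 4522240, 10625024, 131617, 1116168, 2129992,
     4195345, 133138, 1179716, 4194882, 4229124, 86018, 270372, 2621570, 8389892, 42112, 1052960,
     2376192, 8978448, 66180, 1311746, 2101268, 8421410, 262296, 299009, 8393224, 9437313]),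
  ([4, 20],
    [328000, 2099205, 1066000, 4329600, 8396810, 557600, 2171904, 9439296, 41028, 8454180,
     1053188, 4719620, 131348, 278660, 132161, 1114241, 141344, 10518656, 5513216, 8393984,
     532737, 8651265, 8848, 9060352, 526472, 2228744, 1186, 1212418, 295944, 1048872, 36881,
     4210721, 2363424, 4229376, 264210, 2113794, 20552, 4259864, 84480, 2621520, 593922, 4194882]),
  ([5, 5, 5, 9],
    [303360, 2146306, 2359809, 165904, 1311808, 10485896, 33348, 266250, 2107424, 2752576,
     5275656, 8718336, 2370, 8265, 18952, 132360, 1050753, 8405072, 589864, 4264000, 4720644,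
     81925, 545024, 4194593, 1196064, 8523777, 9437444, 139396, 1053200, 8389666, 37024, 262196,
     2102276, 558081, 2162960, 4472960, 1122306, 4325890, 8921600, 67200, 524434, 4203536]),
  ([5, 5, 6, 8],
    [9744, 4362240, 2359584, 18441, 1179653, 4718602, 132360, 4202529, 69889, 8421416, 262785,
     2097736, 557121, 1052808, 335880, 10486785, 98818, 8393220, 672256, 5245440, 529440, 1089792,
     296976, 2117648, 266306, 2130052, 2689024, 9715712, 524564, 1048626, 133280, 4211008,
     4259984, 8519760, 10308, 17538, 81956, 8390914, 1115200, 8921216, 2236418, 4457476]),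
  ([5, 5, 7, 7],
    [2196, 337920, 9699456, 2376, 267272, 655496, 1051138, 8390689, 2263040, 4737024, 1064969,
     8421386, 2162728, 4203016, 8354, 66177, 2117760, 4228224, 2359301, 4456466, 278816, 295488,
     2621698, 4325441, 17474, 37121, 200706, 533505, 1089540, 8470544, 5308672, 10494016, 2098704,
     4198436, 139536, 589892, 1180704, 8917504, 147972, 557104, 1052752, 8389892]),
  ([5, 5, 14],
    [4325634, 2393088, 8454784, 18437, 2236544, 4461056, 264328, 2114064, 131652, 4194465, 544896,
     1059328, 525826, 1081474, 1172, 33289, 1180673, 4751364, 4261904, 8536072, 657440, 5259328,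
     167952, 4203528, 344066, 10487810, 17696, 35136, 70720, 8429600, 1310768, 2621512, 4138,
     8274, 1114376, 8913168, 598017, 9441284, 2162724, 8650817, 270596, 2101505]),
  ([5, 6, 6, 7],
    [299016, 9437204, 19008, 729088, 2098256, 4194852, 41028, 70160, 131593, 524362, 2654720,
     4329536, 1114177, 8397314, 1311360, 8651072, 1052930, 8421505, 1065992, 8390696, 5253120,
     10567680, 1212448, 8918016, 9473, 65698, 2105480, 4260104, 270384, 328708, 20612, 35088,
     134272, 540960, 2361346, 4472833, 2228484, 4718736, 147474, 526341, 2101281, 4228098]),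
  ([5, 6, 13],
    [344066, 1216512, 2099205, 533632, 4325505, 8422404, 303105, 671748, 5129, 1048724, 266500,
     1065473, 8740, 524609, 4259908, 8454177, 70272, 1115392, 591880, 2170896, 264352, 2114624,
     4457488, 8405128, 134146, 2130050, 4214816, 9699392, 4178, 1048618, 35392, 2228512, 18704,
     2359816, 4227336, 8520208, 139336, 557104, 5253120, 11014144, 4719106, 8397058]),
  ([5, 7, 12],
    [1285, 530560, 270850, 9584640, 18948, 131713, 1114640, 8421896, 2621984, 4198976, 69668,
     557121, 2101257, 4718612, 139332, 278561, 5251073, 10747908, 1081476, 8456193, 1315072,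
     8922112, 20498, 655370, 168960, 606464, 2171008, 4491264, 2114624, 4325664, 10504, 263312,
     41008, 327752, 1050690, 8388770, 2130178, 4260866, 2230288, 4210824, 1049640, 8388944]),
  ([5, 8, 11],
    [4194881, 11026432, 1057824, 294930, 2232336, 8456194, 2097194, 8389652, 2360576, 8421536,
     2129988, 8651272, 2171392, 9568320, 2099329, 8392961, 280640, 561664, 4359168, 4522016,
     40969, 1310725, 274560, 1083648, 86020, 657416, 147489, 590849, 65864, 131716, 139522,
     1114256, 2608, 5186, 532560, 1065474, 4204548, 5246984, 4210960, 4718722, 17544, 524580]),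
  ([5, 9, 10],
    [4722720, 2117, 8651904, 155650, 2637840, 5373960, 655492, 4211713, 21120, 132384, 1327168,
     10618880, 81956, 167937, 18696, 131664, 567296, 4268096, 1056912, 2106376, 525378, 4196482,
     32936, 70672, 1082372, 2162817, 264240, 8392776, 1116672, 2130240, 1052930, 2097698, 327690,
     8421394, 524809, 4194580, 270593, 8397316, 4489728, 8978688, 2363396, 9437217]),
  ([5, 19],
    [2163232, 4734980, 526472, 9502848, 4196400, 4260872, 131113, 32932, 17442, 67652, 1082432,
     1198080, 263428, 4333632, 2359376, 1049098, 16961, 4457088, 131218, 135684, 8667144, 1056788,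
     10485765, 4424, 2138120, 8912962, 8552704, 2753536, 2117760, 9345, 2099458, 82192, 5243137,
     532768, 1314848, 4231170, 335874, 593921, 296961, 557584, 8393744, 8399360]),
  ([6, 6, 6, 6],
    [655428, 2130960, 8397057, 278688, 1054722, 4260360, 4644, 18441, 65682, 299016, 1122336,
     4341762, 10768, 34948, 131713, 1441808, 4464644, 5275649, 41026, 140296, 164128, 528401,
     2162693, 8405012, 263233, 1049860, 2629760, 4194640, 8946176, 10618880, 329984, 1065536,
     2359810, 4199552, 4720672, 9437320, 524554, 607232, 2097256, 2117888, 8389666, 8458304]),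
  ([6, 6, 12],
    [585, 534656, 4259874, 1064980, 8520960, 2396160, 8466, 67844, 525348, 4195472, 41992, 328208,
     2621704, 4198916, 1122368, 4333569, 4735040, 8978433, 659472, 2180096, 5275904, 8658948,
     69768, 557570, 2105888, 4458504, 278785, 1053697, 2228292, 8421456, 4448, 32901, 263234,
     2099217, 22530, 165920, 1310880, 10485890, 148096, 1179658, 8405032, 9439744]),
  ([6, 7, 11],
    [2364416, 4366336, 8454720, 18468, 1318916, 2654240, 262248, 2097684, 74784, 8425476, 65669,
     8388898, 135712, 4195396, 655620, 5243040, 2164992, 8652928, 295169, 2105474, 8528, 33416,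
     12297, 33810, 535040, 1083456, 540738, 1065473, 2228289, 4456962, 344080, 10502152, 133130,
     4196369, 528528, 1049864, 148608, 4215040, 1118210, 8913921, 4784136, 9568272]),
  ([6, 8, 10],
    [9764864, 2785280, 4260, 4212992, 141344, 524612, 147461, 4718626, 73748, 1048680, 8421892,
     10486816, 295200, 2361348, 82464, 5243908, 1065090, 4263937, 1089537, 2162754, 66824,
     1051152, 592000, 1184000, 34826, 2097425, 8390721, 8397058, 132114, 524809, 8519816, 8917008,
     549888, 4325952, 2117640, 4227216, 278608, 4464648, 263297, 266754, 37952, 2105984]),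
  ([6, 9, 9],
    [4199680, 1089664, 589842, 10488320, 4268544, 4720768, 4325456, 4472834, 4227081, 5242916,
     674, 10257, 35074, 1053200, 67652, 541192, 295488, 1198080, 131589, 264232, 2146320, 9437250,
     558084, 1115144, 167968, 1310977, 2101258, 8388884, 82208, 528449, 140290, 263312, 2098272,
     8406017, 2752768, 8720384, 2162817, 8921120, 8520, 20612, 2367492, 8519816]),
  ([6, 18],
    [1180928, 5261312, 8470784, 37128, 1049184, 2375682, 16552, 524578, 1056778, 545280, 1343616,
     2105664, 17425, 1114132, 4194565, 147524, 264464, 9441281, 69698, 263240, 4460576, 34881,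
     2232336, 8651268, 5252, 335873, 4718672, 2163744, 4228098, 4260360, 592000, 4333696, 8922112,
     41488, 2097793, 2654212, 10276, 655369, 8388754, 133634, 8552480, 10487816]),
  ([7, 7, 10],
    [4227112, 4292, 1181952, 2170896, 4342784, 9470464, 163906, 5242885, 131604, 1049680, 139273,
     1056802, 1376384, 2756608, 1069064, 8519840, 37136, 4196496, 278545, 8912914, 17026, 8393729,
     266784, 525448, 2130049, 4263938, 264202, 524577, 68097, 2098434, 66596, 2097736, 2115616,
     8454408, 304128, 4727296, 606272, 10747908, 559108, 4456768, 24836, 8398912]),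
  ([7, 8, 9],
    [4460672, 8519746, 2623744, 1048613, 278816, 4204548, 340, 2090, 295940, 4260384, 167968,
     8454276, 671748, 10493984, 525472, 2101764, 2228360, 8917008, 1182208, 9438464, 4325633,
     8652801, 140304, 8405512, 41224, 83984, 35008, 69890, 1056898, 1069120, 657, 5129, 598017,
     2146305, 270912, 4211714, 557570, 2163776, 2359314, 4718664, 1376264, 5275664]),
  ([7, 17],
    [263188, 295200, 139394, 2179073, 2359306, 1320960, 10486020, 69904, 540930, 133377, 9568288,
     66594, 2262016, 8390674, 659460, 1053697, 18468, 2101408, 1065104, 147976, 4325456, 2105872,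
     2623552, 557073, 8233, 4719136, 8986624, 525448, 4203776, 8406080, 1048904, 41028, 4476928,
     8425480, 4674, 327872, 8651265, 35456, 4194437, 5275650, 4261896, 1114628]),
  ([8, 8, 8],
    [2621954, 4194836, 4199426, 266512, 532497, 8917024, 66704, 622596, 2134144, 525576, 1052677,
     10487824, 151560, 657472, 1065040, 70208, 163858, 4735104, 4325633, 8388930, 8405505, 9284,
     2228260, 2376704, 33825, 2171136, 8650884, 18692, 2097225, 9569280, 81954, 139904, 4489280,
     329729, 1048992, 8429576, 2186, 1083904, 5308424, 262696, 1318914, 4204576]),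
  ([8, 16],
    [4723200, 270354, 1050657, 2245632, 66084, 4227081, 2105857, 4457504, 135233, 540832, 327937,
     8429600, 131368, 8404997, 525329, 2101282, 282632, 663556, 1065536, 4327552, 83984, 1212418,
     4210946, 8520208, 650, 4194388, 297472, 5316608, 2099460, 9438216, 10312, 1310852, 1052944,
     8914946, 66626, 2130064, 9600, 10747968, 557376, 8458368, 37892, 2686984]),
  ([9, 15],
    [2085, 65832, 2097476, 1124352, 2425856, 10520576, 657664, 2117664, 4260356, 69762, 2228242,
     4196496, 264202, 2105473, 8454224, 19008, 606209, 2621960, 8962, 278548, 8913056, 295552,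
     533520, 9453570, 561156, 1180192, 4211968, 4625, 147592, 4718658, 4464672, 8527876, 8655104,
     33826, 1049732, 1081616, 41032, 1310785, 8389641, 136256, 4358145, 5246984]),
  ([10, 14],
    [528394, 2752640, 4768, 17540, 8945668, 4270080, 4420, 1310737, 2162708, 4325381, 270852,
     1050660, 70657, 4214800, 1216512, 10752000, 606720, 4719648, 526416, 532737, 34945, 8396944,
     1114248, 4456578, 4227336, 8454210, 327968, 5243456, 280584, 1057794, 132368, 2113601,
     296000, 9453824, 33298, 8388649, 2138144, 8522240, 139336, 2099458, 147490, 2098696]),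
  ([11, 13],
    [598048, 2100228, 2338, 270596, 2130192, 1343490, 4751364, 9346, 8553472, 8454401, 4461568,
     66640, 37408, 2163202, 69764, 4325536, 8405028, 8651328, 11010176, 2117696, 2359329, 4194632,
     43072, 264336, 9445392, 4210706, 1049640, 2236424, 4203009, 5310464, 8392714, 344072, 32905,
     526856, 149505, 528401, 131604, 1184000, 1065600, 1048645, 655426, 541952]),
  ([12, 12],
    [268320, 2130180, 533000, 4259905, 1065090, 8520720, 18452, 131236, 1049888, 8390914, 73762,
     590096, 4203524, 4720768, 139521, 1116168, 4211232, 8912964, 70148, 557089, 2107456, 4456712,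
     20800, 166400, 1310725, 10485800, 2768896, 5378048, 8732672, 9478144, 270480, 529410,
     2163840, 4227090, 37000, 296000, 2101265, 2359810, 17417, 131146, 1049168, 8389249]),
  ([24],
    [270376, 2107396, 2622496, 33060, 2359425, 8463360, 4641, 1188096, 2162706, 84000, 2097480,
     4726785, 16657, 1114177, 4264192, 132101, 263426, 328196, 34825, 589960, 8915200, 528452,
     1065992, 4458512, 4210820, 4228160, 8667200, 5264, 1347584, 9437204, 8784, 2248704, 5242914,
     133186, 541186, 4325896, 41090, 8519840, 10519040, 688144, 1051264, 8392714])]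

theorem table_types : partsFrom 24 24 3 = table.map Prod.fst := by
  decide +kernel

theorem table_certified : table.all (fun e => isCertificate e.1 e.2) = true := by
  decide +kernel

/-! ### Partitions and correctness of the evaluated definitions -/

theorem mem_partsFrom (L : List ℕ) : ∀ k m, L.length ≤ k → L.Pairwise (· ≤ ·) →
    (∀ a ∈ L, m ≤ a) → (∀ a ∈ L, 0 < a) → L ∈ partsFrom k L.sum m := by
  induction L with
  | nil => intro k m _ _ _ _; cases k <;> simp [partsFrom]
  | cons a t ih =>
    intro k m hk hs hm h0
    cases k with
    | zero => simp at hk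
    | succ k =>
      have ha : 0 < a := h0 a (by simp)
      have hma : m ≤ a := hm a (by simp)
      rw [List.pairwise_cons] at hs
      have := ih k a (by simpa using hk) hs.2 hs.1 fun b hb => h0 b (by simp [hb])
      have hpos : (a :: t).sum ≠ 0 := by rw [List.sum_cons]; omega
      rw [partsFrom, if_neg hpos, List.mem_flatMap, List.sum_cons]
      refine ⟨a, ?_, ?_⟩
      · rw [List.mem_range'_1]; omega
      · rw [Nat.add_sub_cancel_left]
        exact List.mem_map_of_mem this

theorem hasPoint_eq (i b : ℕ) : hasPoint i b = b.testBit i := by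
  have h : b.testBit i = decide (b >>> i % 2 = 1) := by
    rw [Nat.testBit_eq_decide_div_mod_eq, Nat.shiftRight_eq_div_pow]
  have h2 : hasPoint i b = decide (b >>> i &&& 1 = 1) := by
    rw [Bool.eq_iff_iff, decide_eq_true_iff]
    exact Nat.beq_eq.to_iff
  rw [h, h2, Nat.and_one_is_mod]

theorem withFilter_eq (f : ℕ → Bool) (l : List ℕ) (k : List ℕ → Bool) :
    withFilter f l k = k (l.filter f) := by
  induction l generalizing k with
  | nil => rfl
  | cons b t ih => cases h : f b <;> simp [withFilter, h, ih]

/-! ### From certificates to packings -/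

/-- What the computation `isCertificate` establishes. -/
theorem isCertificate_spec {L l : List ℕ} (h : isCertificate L l = true) :
    l.length = 42 ∧ (∀ b ∈ l, (Finset.univ.filter fun i : Fin 24 => b.testBit i).card = 4) ∧
    ∀ p q : Fin 24, p ≠ q → (l.countP fun b => b.testBit p && b.testBit q) =
      if cycleNext 0 L p = q ∨ cycleNext 0 L q = p then 0 else 1 := by
  simp only [isCertificate, Bool.and_eq_true, List.all_eq_true, Nat.beq_eq, withFilter_eq,
    List.mem_range, List.countP_filter, hasPoint_eq] at h
  obtain ⟨⟨h1, h2⟩, h3⟩ := h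
  refine ⟨h1, fun b hb => ?_, ?_⟩
  · rw [← h2 b hb, Finset.card_filter,
      Fin.sum_univ_eq_sum_range (fun i => if b.testBit i = true then 1 else 0) 24,
      ← Finset.card_filter, List.countP_eq_length_filter]
    simp [Finset.card, Finset.filter, Finset.range, Multiset.range]
  · have key : ∀ p q : Fin 24, q < p → (l.countP fun b => b.testBit p && b.testBit q) =
        if cycleNext 0 L p = q ∨ cycleNext 0 L q = p then 0 else 1 := by
      intro p q hpq
      have := h3 p p.2 q hpq
      simp only [Bool.and_comm (Nat.testBit _ (q : ℕ))] at this
      rw [this]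
      by_cases hc : cycleNext 0 L p = q ∨ cycleNext 0 L q = p <;> 
        simp_all [cond_eq_ite]
    intro p q hpq
    rcases lt_or_gt_of_ne hpq with hlt | hgt
    · have := key q p hlt
      simp only [Bool.and_comm (Nat.testBit _ (q : ℕ))] at this
      rw [this]
      simp only [or_comm]
    · exact key p q hgt

/-- The point set carried by a bit mask, after relabelling the points by `c`. -/
def blockOf (c : Equiv.Perm (Fin 24)) (b : ℕ) : Finset (Fin 24) :=
  Finset.univ.filter fun v => b.testBit (c.symm v)

/-- A certificate gives, after any relabelling `c` of the points, a maximum packing whose leave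
is the relabelled union of cycles. -/
theorem exists_packing_of_certificate {L l : List ℕ} (h : isCertificate L l = true)
    (c : Equiv.Perm (Fin 24)) :
    ∃ B : Finset (Finset (Fin 24)), IsPacking B ∧ B.card = 42 ∧
      ∀ p q : Fin 24, p ≠ q → (LeaveAdj B p q ↔
        cycleNext 0 L (c.symm p) = c.symm q ∨ cycleNext 0 L (c.symm q) = c.symm p) := by
  obtain ⟨h1, h2, h3⟩ := isCertificate_spec h
  have hcard : ∀ b ∈ l, (blockOf c b).card = 4 := by
    intro b hb
    rw [← h2 b hb, blockOf]
    refine Finset.card_bij' (fun v _ => c.symm v) (fun v _ => c v) ?_ ?_ ?_ ?_ <;> simp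
  have hle : ∀ p q : Fin 24, p ≠ q → (l.countP fun b => b.testBit p && b.testBit q) ≤ 1 := by
    intro p q hpq
    rw [h3 p q hpq]
    split_ifs <;> simp
  -- Two occurrences in `l` of masks through the same pair are the same occurrence.
  have hpair : l.Pairwise fun b b' => ∀ p q : Fin 24, p ≠ q → b.testBit p → b.testBit q →
      b'.testBit p → b'.testBit q → False := by
    rw [List.pairwise_iff_forall_sublist]
    intro b b' hs p q hpq hb1 hb2 hb3 hb4
    have := (hs.countP_le (p := fun b => b.testBit p && b.testBit q)).trans (hle p q hpq)
    simp [hb1, hb2, hb3, hb4] at this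
  have hpts : ∀ b ∈ l, ∃ p q : Fin 24, p ≠ q ∧ b.testBit p ∧ b.testBit q := by
    intro b hb
    obtain ⟨p, hp, q, hq, hpq⟩ := Finset.one_lt_card.1 (by rw [h2 b hb]; norm_num)
    simp only [Finset.mem_filter, Finset.mem_univ, true_and] at hp hq
    exact ⟨p, q, hpq, hp, hq⟩
  have huniq : ∀ b ∈ l, ∀ b' ∈ l, ∀ p q : Fin 24, p ≠ q → b.testBit p → b.testBit q →
      b'.testBit p → b'.testBit q → b = b' := by
    intro b hb b' hb' p q hpq h1 h2 h3 h4
    by_contra hne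
    have : Std.Symm fun b b' : ℕ => ∀ p q : Fin 24, p ≠ q → b.testBit p → b.testBit q →
        b'.testBit p → b'.testBit q → False :=
      ⟨fun x y hxy p q hpq h1 h2 h3 h4 => hxy p q hpq h3 h4 h1 h2⟩
    exact hpair.forall hb hb' hne p q hpq h1 h2 h3 h4
  have hnodup : (l.map (blockOf c)).Nodup := by
    rw [List.Nodup, List.pairwise_map]
    refine (List.Pairwise.and_mem.1 hpair).imp ?_
    rintro b b' ⟨hb, hb', hbb⟩ heq
    obtain ⟨p, q, hpq, hp, hq⟩ := hpts b hb
    have key : ∀ v : Fin 24, b.testBit v → b'.testBit v := by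
      intro v hv
      have : c v ∈ blockOf c b := by simp [blockOf, hv]
      rw [heq] at this
      simpa [blockOf] using this
    exact hbb p q hpq hp hq (key p hp) (key q hq)
  refine ⟨(l.map (blockOf c)).toFinset, ⟨?_, ?_⟩, ?_, ?_⟩
  · intro b hb
    obtain ⟨b, hbl, rfl⟩ := List.mem_map.1 (List.mem_toFinset.1 hb)
    exact hcard b hbl
  · intro p q hpq b₁ hb₁ b₂ hb₂ m1 m2 m3 m4
    obtain ⟨b₁, hl₁, rfl⟩ := List.mem_map.1 (List.mem_toFinset.1 hb₁)
    obtain ⟨b₂, hl₂, rfl⟩ := List.mem_map.1 (List.mem_toFinset.1 hb₂)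
    simp only [blockOf, Finset.mem_filter, Finset.mem_univ, true_and] at m1 m2 m3 m4
    rw [huniq b₁ hl₁ b₂ hl₂ (c.symm p) (c.symm q) (c.symm.injective.ne hpq) m1 m2 m3 m4]
  · rw [List.toFinset_card_of_nodup hnodup, List.length_map, h1]
  · intro p q hpq
    have h3' := h3 (c.symm p) (c.symm q) (c.symm.injective.ne hpq)
    have hzero : LeaveAdj (l.map (blockOf c)).toFinset p q ↔
        (l.countP fun b => b.testBit (c.symm p) && b.testBit (c.symm q)) = 0 := by
      rw [List.countP_eq_zero]
      simp [LeaveAdj, hpq, blockOf]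
    rw [hzero, h3']
    split_ifs with hc <;> simp [hc]

/-! ### Permutations with prescribed cycle type -/

/-- The permutation of the points that rotates consecutive intervals, starting at `o`, whose
lengths are given by the list. -/
def stdPerm : ℕ → List ℕ → Equiv.Perm (Fin 24)
  | _, [] => 1
  | o, a :: t => ((List.range' o a).map (Fin.ofNat 24)).formPerm * stdPerm (o + a) t

theorem mem_interval {o a : ℕ} (h : o + a ≤ 24) (i : Fin 24) :
    i ∈ (List.range' o a).map (Fin.ofNat 24) ↔ o ≤ i ∧ (i : ℕ) < o + a := by
  simp only [List.mem_map, List.mem_range'_1]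
  constructor
  · rintro ⟨x, ⟨h1, h2⟩, rfl⟩
    have : x % 24 = x := Nat.mod_eq_of_lt (by omega)
    simp only [Fin.ofNat, this]
    omega
  · intro hi
    exact ⟨i, hi, by ext; simp [Fin.ofNat, Nat.mod_eq_of_lt i.2]⟩

theorem nodup_interval {o a : ℕ} (h : o + a ≤ 24) :
    ((List.range' o a).map (Fin.ofNat 24)).Nodup := by
  refine List.Nodup.map_on ?_ List.nodup_range'
  intro x hx y hy hxy
  rw [List.mem_range'_1] at hx hy
  have := congrArg Fin.val hxy
  simp only [Fin.ofNat] at this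
  rwa [Nat.mod_eq_of_lt (by omega), Nat.mod_eq_of_lt (by omega)] at this

theorem formPerm_interval {o a : ℕ} (h : o + a ≤ 24) (i : Fin 24) (h1 : o ≤ i)
    (h2 : (i : ℕ) < o + a) :
    ((((List.range' o a).map (Fin.ofNat 24)).formPerm i : Fin 24) : ℕ) =
      if (i : ℕ) + 1 < o + a then (i : ℕ) + 1 else o := by
  set xs := (List.range' o a).map (Fin.ofNat 24) with hxs
  have hlen : xs.length = a := by simp [hxs]
  have hget : ∀ j (hj : j < xs.length), ((xs[j] : Fin 24) : ℕ) = o + j := by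
    intro j hj
    simp only [hxs, List.getElem_map, List.getElem_range', Fin.ofNat]
    rw [Nat.mod_eq_of_lt (by omega)]; omega
  have hi : xs[(i : ℕ) - o]'(by omega) = i := by
    ext; rw [hget]; omega
  have := List.formPerm_apply_getElem xs (nodup_interval h) (i - o) (by omega)
  rw [hi] at this
  rw [this, hget, hlen]
  split_ifs with hc
  · rw [Nat.mod_eq_of_lt (by omega)]; omega
  · have : (i : ℕ) - o + 1 = a := by omega
    rw [this, Nat.mod_self, Nat.add_zero]

/-- `stdPerm` acts as `cycleNext`. The bounds `i < o` and `o ≤ cycleNext o L i` are what the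
induction on the list needs for the factors of `stdPerm` not to interfere. -/
theorem stdPerm_apply (L : List ℕ) : ∀ o, o + L.sum ≤ 24 →
    (∀ i : Fin 24, (i : ℕ) < o → stdPerm o L i = i) ∧
    ∀ i : Fin 24, o ≤ i → ((stdPerm o L i : Fin 24) : ℕ) = cycleNext o L i ∧
      o ≤ cycleNext o L i := by
  induction L with
  | nil => intro o _; simp [stdPerm, cycleNext]
  | cons a t ih =>
    intro o ho
    rw [List.sum_cons] at ho
    obtain ⟨ih1, ih2⟩ := ih (o + a) (by omega)
    have hfix : ∀ i : Fin 24, ¬ (o ≤ i ∧ (i : ℕ) < o + a) →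
        ((List.range' o a).map (Fin.ofNat 24)).formPerm i = i := fun i hi =>
      List.formPerm_apply_of_notMem (by rwa [mem_interval (by omega)])
    refine ⟨fun i hi => ?_, fun i hi => ?_⟩
    · rw [stdPerm, Equiv.Perm.mul_apply, ih1 i (by omega), hfix i (by omega)]
    · rw [stdPerm, Equiv.Perm.mul_apply, cycleNext]
      by_cases hlt : (i : ℕ) < o + a
      · rw [ih1 i hlt, formPerm_interval (by omega) i hi hlt, if_pos hlt]
        refine ⟨rfl, ?_⟩
        split_ifs <;> omega
      · obtain ⟨e1, e2⟩ := ih2 i (by omega)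
        rw [if_neg hlt, hfix _ (by omega), e1]
        exact ⟨rfl, by omega⟩

theorem stdPerm_cycleType (L : List ℕ) : ∀ o, o + L.sum ≤ 24 → (∀ a ∈ L, 2 ≤ a) →
    (stdPerm o L).cycleType = L := by
  induction L with
  | nil => intro o _ _; simp [stdPerm]
  | cons a t ih =>
    intro o ho ha
    rw [List.sum_cons] at ho
    have h2 : 2 ≤ a := ha a (by simp)
    have hd : Equiv.Perm.Disjoint ((List.range' o a).map (Fin.ofNat 24)).formPerm
        (stdPerm (o + a) t) := by
      intro i
      by_cases hlt : (i : ℕ) < o + a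
      · exact Or.inr ((stdPerm_apply t (o + a) (by omega)).1 i hlt)
      · refine Or.inl (List.formPerm_apply_of_notMem ?_)
        rw [mem_interval (by omega)]; omega
    have hc : ((List.range' o a).map (Fin.ofNat 24)).formPerm.cycleType = {a} := by
      have hlen : 2 ≤ ((List.range' o a).map (Fin.ofNat 24)).length := by simpa using h2
      have hnd := nodup_interval (o := o) (a := a) (by omega)
      rw [(List.isCycle_formPerm hnd hlen).cycleType, List.support_formPerm_of_nodup _ hnd,
        List.toFinset_card_of_nodup hnd]
      · simp
      · intro x hx
        simp [hx] at hlen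
    rw [stdPerm, hd.cycleType_mul, hc, ih (o + a) (by omega) fun b hb => ha b (by simp [hb])]
    rfl

/-! ### Orienting a 2-regular graph -/

/-- A 2-regular graph can be oriented consistently along its cycles. -/
theorem exists_orientation (G : SimpleGraph (Fin 24))
    (hG : ∀ v : Fin 24, {w | G.Adj v w}.ncard = 2) :
    ∃ σ : Equiv.Perm (Fin 24), (∀ v w, G.Adj v w ↔ σ v = w ∨ σ w = v) ∧
      ∀ v, σ (σ v) ≠ v := by
  classical
  -- `other v w` is the neighbour of `w` different from `v`.
  have hother : ∀ v w, G.Adj v w → ∃ x, G.Adj w x ∧ x ≠ v ∧ ∀ y, G.Adj w y → y = v ∨ y = x := by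
    intro v w hvw
    obtain ⟨a, b, hab, hs⟩ := Set.ncard_eq_two.1 (hG w)
    have hN : ∀ y, G.Adj w y ↔ y = a ∨ y = b := fun y => by
      have := Set.ext_iff.1 hs y
      simpa using this
    rcases (hN v).1 hvw.symm with rfl | rfl
    · exact ⟨b, (hN b).2 (Or.inr rfl), hab.symm, fun y hy => (hN y).1 hy⟩
    · exact ⟨a, (hN a).2 (Or.inl rfl), hab, fun y hy => ((hN y).1 hy).symm⟩
  choose! other hadj hne hall using hother
  have hoo : ∀ v w, G.Adj v w → other (other v w) w = v := by
    intro v w h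
    rcases hall _ _ (hadj v w h).symm v h.symm with h' | h'
    · exact absurd h'.symm (hne v w h)
    · exact h'.symm
  let D := {d : Fin 24 × Fin 24 // G.Adj d.1 d.2}
  let rev : D → D := fun d => ⟨(d.1.2, d.1.1), d.2.symm⟩
  have hrr : ∀ d, rev (rev d) = d := fun d => rfl
  -- `next` follows a dart through its head.
  let next : Equiv.Perm D :=
    { toFun := fun d => ⟨(d.1.2, other d.1.1 d.1.2), hadj _ _ d.2⟩
      invFun := fun d => ⟨(other d.1.2 d.1.1, d.1.1), (hadj _ _ d.2.symm).symm⟩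
      left_inv := fun d => Subtype.ext (Prod.ext (hoo _ _ d.2) rfl)
      right_inv := fun d => Subtype.ext (Prod.ext rfl (hoo _ _ d.2.symm)) }
  have hnr : ∀ d, next (rev (next d)) = rev d := fun d =>
    Subtype.ext (Prod.ext rfl (hoo _ _ d.2))
  have hnr' : ∀ (m : ℕ) d, (next ^ m) (rev ((next ^ m) d)) = rev d := by
    intro m
    induction m with
    | zero => intro d; rfl
    | succ m ih =>
      intro d
      have e : (next ^ (m + 1)) d = next ((next ^ m) d) := by
        rw [pow_succ', Equiv.Perm.mul_apply]
      rw [e, pow_succ, Equiv.Perm.mul_apply, hnr, ih]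
  have hrev_ne : ∀ d, rev d ≠ d := by
    rintro ⟨⟨v, w⟩, h⟩ he
    have : w = v := congrArg (fun d : D => d.1.1) he
    exact h.ne this.symm
  have hrev_next : ∀ d, next d ≠ rev d := by
    rintro ⟨⟨v, w⟩, h⟩ he
    exact hne v w h (congrArg (fun d : D => d.1.2) he)
  -- A dart and its reverse are never on the same orbit.
  have horb : ∀ d, ¬ next.SameCycle d (rev d) := by
    intro d hd
    obtain ⟨k, hk⟩ := hd.exists_nat_pow_eq
    rcases Nat.even_or_odd' k with ⟨m, rfl | rfl⟩
    · apply hrev_ne ((next ^ m) d)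
      apply (next ^ m).injective
      rw [hnr', ← hk, two_mul, pow_add, Equiv.Perm.mul_apply]
    · apply hrev_next ((next ^ m) d)
      apply (next ^ m).injective
      rw [hnr', ← hk, show 2 * m + 1 = m + (1 + m) by ring, pow_add, pow_add, pow_one,
        Equiv.Perm.mul_apply, Equiv.Perm.mul_apply]
  have hrev_same : ∀ d e, next.SameCycle d e → next.SameCycle (rev d) (rev e) := by
    intro d e hde
    obtain ⟨k, rfl⟩ := hde.exists_nat_pow_eq
    rw [← hnr' k d]
    exact (Equiv.Perm.sameCycle_pow_left).2 (Equiv.Perm.SameCycle.refl _ _)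
  let O := Quotient (Equiv.Perm.SameCycle.setoid next)
  let cl : D → O := fun d => Quotient.mk _ d
  have hcl : ∀ d e, cl d = cl e ↔ next.SameCycle d e := fun d e => Quotient.eq
  -- Of the orbits of a dart and of its reverse, the smaller one in some linear order is selected.
  let S : D → Prop := fun d => WellOrderingRel (cl d) (cl (rev d))
  have hS_rev : ∀ d, S (rev d) ↔ ¬ S d := by
    intro d
    constructor
    · intro h1 h2
      exact asymm_of WellOrderingRel h1 h2
    · intro h
      rcases trichotomous_of WellOrderingRel (cl d) (cl (rev d)) with h' | h' | h'
      · exact absurd h' h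
      · exact absurd ((hcl _ _).1 h') (horb d)
      · exact h'
  have hS_next : ∀ d, S (next d) ↔ S d := by
    intro d
    have h1 : next.SameCycle (next d) d :=
      Equiv.Perm.sameCycle_apply_left.2 (Equiv.Perm.SameCycle.refl _ _)
    simp only [S]
    rw [(hcl _ _).2 h1, (hcl _ _).2 (hrev_same _ _ h1)]
  have hout : ∀ v, ∃ w, ∃ h : G.Adj v w, S ⟨(v, w), h⟩ := by
    intro v
    obtain ⟨a, b, hab, hs⟩ := Set.ncard_eq_two.1 (hG v)
    have ha : G.Adj v a := by
      have : a ∈ {w | G.Adj v w} := by rw [hs]; simp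
      exact this
    by_cases hSa : S ⟨(v, a), ha⟩
    · exact ⟨a, ha, hSa⟩
    · refine ⟨other a v, hadj a v ha.symm, ?_⟩
      have := (hS_rev ⟨(v, a), ha⟩).2 hSa
      exact (hS_next ⟨(a, v), ha.symm⟩).2 this
  choose f hf hfS using hout
  have hinj : Function.Injective f := by
    intro v v' hvv
    by_contra hne'
    have hv' : G.Adj v' (f v) := by rw [hvv]; exact hf v'
    have e : other v (f v) = v' := by
      rcases hall v (f v) (hf v) v' hv'.symm with h | h
      · exact absurd h.symm hne'
      · exact h.symm
    have h1 : S ⟨(v', f v), hv'⟩ := by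
      have := hfS v'
      simpa only [hvv] using this
    have h2 : S (next ⟨(v, f v), hf v⟩) := (hS_next _).2 (hfS v)
    have h3 : next ⟨(v, f v), hf v⟩ = rev ⟨(v', f v), hv'⟩ :=
      Subtype.ext (Prod.ext rfl e)
    rw [h3] at h2
    exact (hS_rev _).1 h2 h1
  have huniq : ∀ v w (h : G.Adj v w), S ⟨(v, w), h⟩ → f v = w := by
    intro v w h hSw
    by_contra hne'
    have e : other w v = f v := by
      rcases hall w v h.symm (f v) (hf v) with h' | h'
      · exact absurd h' hne'
      · exact h'.symm
    have h3 : next ⟨(w, v), h.symm⟩ = ⟨(v, f v), hf v⟩ := Subtype.ext (Prod.ext rfl e)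
    have h2 := (hS_next ⟨(w, v), h.symm⟩).1 (h3 ▸ hfS v)
    exact (hS_rev ⟨(v, w), h⟩).1 h2 hSw
  refine ⟨Equiv.ofBijective f (Finite.injective_iff_bijective.1 hinj), ?_, ?_⟩
  · intro v w
    simp only [Equiv.ofBijective_apply]
    constructor
    · intro h
      by_cases hSw : S ⟨(v, w), h⟩
      · exact Or.inl (huniq v w h hSw)
      · exact Or.inr (huniq w v h.symm ((hS_rev ⟨(v, w), h⟩).2 hSw))
    · rintro (rfl | rfl)
      · exact hf v
      · exact (hf w).symm
  · intro v hv
    simp only [Equiv.ofBijective_apply] at hv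
    have h1 := hfS (f v)
    have h2 := (hS_rev ⟨(v, f v), hf v⟩)
    have h3 : (⟨(f v, f (f v)), hf (f v)⟩ : D) = rev ⟨(v, f v), hf v⟩ :=
      Subtype.ext (Prod.ext rfl hv)
    rw [h3] at h1
    exact h2.1 h1 (hfS v)

theorem three_le_cycleType {σ : Equiv.Perm (Fin 24)} (h : ∀ v, σ (σ v) ≠ v) :
    σ.cycleType.sum = 24 ∧ ∀ a ∈ σ.cycleType, 3 ≤ a := by
  constructor
  · have hs : σ.support = Finset.univ := by
      ext v
      simp only [Equiv.Perm.mem_support, Finset.mem_univ, iff_true]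
      intro hv
      exact h v (by rw [hv, hv])
    rw [Equiv.Perm.sum_cycleType, hs]
    simp
  · intro a ha
    have h2 := Equiv.Perm.two_le_of_mem_cycleType ha
    by_contra hlt
    have : a = 2 := by omega
    subst this
    obtain ⟨c, τ, rfl, hd, hc, hcard⟩ := Equiv.Perm.mem_cycleType_iff.1 ha
    obtain ⟨x, y, hxy, rfl⟩ := Equiv.Perm.card_support_eq_two.1 hcard
    apply h x
    have hx : τ x = x := by
      rcases hd x with h' | h'
      · exact absurd h' (by simpa using hxy.symm)
      · exact h'
    have hy : τ y = y := by
      rcases hd y with h' | h'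
      · exact absurd h' (by simpa using hxy)
      · exact h'
    simp [Equiv.Perm.mul_apply, hx, hy]

/-- Every 2-regular graph on 24 vertices is the leave of some maximum 2-(24,4,1) packing. -/
theorem every_two_regular_graph_is_a_leave (G : SimpleGraph (Fin 24))
    (hG : ∀ v : Fin 24, {w | G.Adj v w}.ncard = 2) :
    ∃ B : Finset (Finset (Fin 24)), IsPacking B ∧ B.card = 42 ∧
      ∀ p q : Fin 24, G.Adj p q ↔ LeaveAdj B p q := by
  obtain ⟨σ, hσ, hσ2⟩ := exists_orientation G hG
  obtain ⟨hsum, h3⟩ := three_le_cycleType hσ2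
  set L : List ℕ := σ.cycleType.sort (· ≤ ·) with hL
  have hLσ : (L : Multiset ℕ) = σ.cycleType := Multiset.sort_eq _ _
  have hLsum : L.sum = 24 := by rw [← hsum, ← hLσ, Multiset.sum_coe]
  have hL3 : ∀ a ∈ L, 3 ≤ a := fun a ha => h3 a (by rwa [← hLσ, Multiset.mem_coe])
  have hlen : L.length ≤ 24 := by
    rw [← hLsum]
    exact List.length_le_sum_of_one_le L fun a ha => le_trans (by norm_num) (hL3 a ha)
  have hmem : L ∈ table.map Prod.fst := by
    rw [← table_types, ← hLsum]
    have := mem_partsFrom L 24 3 hlen (Multiset.pairwise_sort _ _) hL3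
      fun a ha => lt_of_lt_of_le (by norm_num) (hL3 a ha)
    rwa [hLsum] at *
  obtain ⟨⟨L', l⟩, hent, hL'⟩ := List.mem_map.1 hmem
  replace hL' : L' = L := hL'
  rw [hL'] at hent
  have hcert : isCertificate L l = true := List.all_eq_true.1 table_certified _ hent
  have hτ : (stdPerm 0 L).cycleType = σ.cycleType := by
    rw [← hLσ]
    exact stdPerm_cycleType L 0 (by omega) fun a ha => le_trans (by norm_num) (hL3 a ha)
  obtain ⟨c, hc⟩ := isConj_iff.1 (Equiv.Perm.isConj_iff_cycleType_eq.2 hτ)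
  have hstep : ∀ p q, cycleNext 0 L (c.symm p) = c.symm q ↔ σ p = q := by
    intro p q
    rw [← ((stdPerm_apply L 0 (by omega)).2 (c.symm p) (Nat.zero_le _)).1, Fin.val_inj, ← hc,
      Equiv.eq_symm_apply]
    rfl
  obtain ⟨B, hB, hcard, hleave⟩ := exists_packing_of_certificate hcert c
  refine ⟨B, hB, hcard, fun p q => ?_⟩
  by_cases hpq : p = q
  · subst hpq
    simp [LeaveAdj]
  · rw [hleave p q hpq, hstep, hstep, hσ]
end

section
/- If a 2-(24,4,1) packing has exactly 42 blocks, then its leave is a 2-regular graph on the 24 points, i.e., every point lies in exactly 2 uncovered pairs; consequently every point lies in exactly 7 blocks. -/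
/-- The points other than `v` that share a block with `v`. -/
def coveredNeighbors (B : Finset (Finset (Fin 24))) (v : Fin 24) : Finset (Fin 24) :=
  (B.filter (fun b => v ∈ b)).biUnion (fun b => b.erase v)

lemma coveredNeighbors_subset (B : Finset (Finset (Fin 24))) (v : Fin 24) :
    coveredNeighbors B v ⊆ Finset.univ.erase v := by
  intro w hw
  simp only [coveredNeighbors, Finset.mem_biUnion, Finset.mem_erase] at hw
  obtain ⟨b, -, hne, -⟩ := hw
  simp [hne]

/-- The triples `b \ {v}` are pairwise disjoint because two blocks through `v` meet only in `v`. -/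
lemma card_coveredNeighbors {B : Finset (Finset (Fin 24))} (hB : IsPacking B) (v : Fin 24) :
    (coveredNeighbors B v).card = 3 * (B.filter (fun b => v ∈ b)).card := by
  rw [coveredNeighbors, Finset.card_biUnion, Finset.sum_const_nat (m := 3), mul_comm]
  · intro b hb
    rw [Finset.mem_filter] at hb
    rw [Finset.card_erase_of_mem hb.2, hB.1 b hb.1]
  · intro b hb c hc hbc
    rw [Finset.mem_coe, Finset.mem_filter] at hb hc
    refine Finset.disjoint_left.2 fun w hwb hwc => hbc ?_
    rw [Finset.mem_erase] at hwb hwc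
    exact hB.2 v w hwb.1.symm b hb.1 c hc.1 hb.2 hwb.2 hc.2 hwc.2

lemma card_blocks_through_le {B : Finset (Finset (Fin 24))} (hB : IsPacking B) (v : Fin 24) :
    (B.filter (fun b => v ∈ b)).card ≤ 7 := by
  have h := Finset.card_le_card (coveredNeighbors_subset B v)
  rw [card_coveredNeighbors hB, Finset.card_erase_of_mem (Finset.mem_univ v),
    Finset.card_univ, Fintype.card_fin] at h
  omega

/-- Double counting of the incident point-block pairs. -/
lemma sum_card_blocks_through {B : Finset (Finset (Fin 24))} (hB : IsPacking B) :
    ∑ v : Fin 24, (B.filter (fun b => v ∈ b)).card = B.card * 4 := by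
  have h := Finset.sum_card_bipartiteAbove_eq_sum_card_bipartiteBelow
    (s := (Finset.univ : Finset (Fin 24))) (t := B) (fun v b => v ∈ b)
  simp only [Finset.bipartiteAbove, Finset.bipartiteBelow] at h
  rw [h]
  refine Finset.sum_const_nat fun b hb => ?_
  rw [Finset.filter_univ_mem, hB.1 b hb]

lemma leave_neighbors_eq (B : Finset (Finset (Fin 24))) (v : Fin 24) :
    {w | LeaveAdj B v w} = ↑(Finset.univ.erase v \ coveredNeighbors B v) := by
  ext w
  simp only [LeaveAdj, coveredNeighbors, Set.mem_ofPred_eq, Finset.mem_coe, Finset.mem_sdiff,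
    Finset.mem_erase, Finset.mem_univ, and_true, Finset.mem_biUnion, Finset.mem_filter]
  grind

/-- The leave of a maximum 2-(24,4,1) packing is 2-regular, and every point lies
in exactly 7 blocks. -/
theorem leave_of_maximum_packing_two_regular (B : Finset (Finset (Fin 24)))
    (hB : IsPacking B) (hcard : B.card = 42) :
    (∀ v : Fin 24, {w | LeaveAdj B v w}.ncard = 2) ∧
    (∀ v : Fin 24, (B.filter (fun b => v ∈ b)).card = 7) := by
  have hr : ∀ v : Fin 24, (B.filter (fun b => v ∈ b)).card = 7 := by
    -- The replication numbers are at most 7 and have the same sum as the constant 7.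
    have h := (Finset.sum_eq_sum_iff_of_le
      (fun v (_ : v ∈ (Finset.univ : Finset (Fin 24))) => card_blocks_through_le hB v)).1
      (by rw [sum_card_blocks_through hB, hcard]; simp)
    exact fun v => h v (Finset.mem_univ v)
  refine ⟨fun v => ?_, hr⟩
  rw [leave_neighbors_eq, Set.ncard_coe_finset,
    Finset.card_sdiff_of_subset (coveredNeighbors_subset B v), card_coveredNeighbors hB, hr,
    Finset.card_erase_of_mem (Finset.mem_univ v), Finset.card_univ, Fintype.card_fin]
end

section
/- There exists a 2-(24,4,1) packing with 42 blocks whose leave is a vertex-disjoint union of six cycles of length 3 and one cycle of length 6, covering all 24 points (leave type 3^6 6^1). -/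
/-- The permutation of the points that rotates each triple `(3j, 3j + 1, 3j + 2)`. -/
def rot (x : ℕ) : ℕ := 3 * (x / 3) + (x + 1) % 3

/-- Representatives of the `rot`-orbits of blocks. -/
def baseBlocks : List (List ℕ) :=
  [[0, 1, 16, 19], [0, 4, 5, 10], [0, 7, 9, 22], [0, 8, 13, 17], [0, 11, 12, 23],
   [0, 14, 20, 21], [3, 7, 21, 23], [3, 8, 12, 14], [3, 10, 15, 19], [3, 13, 18, 20],
   [3, 16, 17, 22], [6, 7, 17, 19], [6, 9, 10, 20], [9, 14, 16, 23]]

/-- The 42 blocks, as lists of numbers: the images of the base blocks under the powers of `rot`. -/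
def blockList : List (List ℕ) :=
  baseBlocks ++ baseBlocks.map (List.map rot) ++ baseBlocks.map (List.map (rot ∘ rot))

/-- The set of points listed in `l`. -/
def toBlock (l : List ℕ) : Finset (Fin 24) := Finset.univ.filter fun p => p.val ∈ l

/-- The 42 blocks of the packing. -/
def blocks : Finset (Finset (Fin 24)) := (blockList.map toBlock).toFinset

/-- The `k`-th vertex of the `i`-th cycle of the leave: cycles `0, …, 5` are the triangles
`{9t + z, 9t + z + 3, 9t + z + 6}` with `i = 3t + z`, `z < 3`, and cycle `6` is the hexagon. -/
def cycleVertex (i k : ℕ) : Fin 24 :=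
  if i < 6 then Fin.ofNat 24 (9 * (i / 3) + i % 3 + 3 * k)
  else [18, 21, 19, 22, 20, 23].getD k 0

lemma mem_toBlock {p : Fin 24} {l : List ℕ} : p ∈ toBlock l ↔ p.val ∈ l := by
  simp [toBlock]

lemma mem_blocks {b : Finset (Fin 24)} : b ∈ blocks ↔ ∃ l ∈ blockList, toBlock l = b := by
  simp [blocks]

lemma card_toBlock : ∀ l ∈ blockList, (toBlock l).card = 4 := by
  decide +kernel

lemma blockList_inter : ∀ l₁ ∈ blockList, ∀ l₂ ∈ blockList,
    l₁ = l₂ ∨ ∀ x ∈ l₁, x ∈ l₂ → ∀ y ∈ l₁, y ∈ l₂ → x = y := by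
  decide +kernel

lemma eq_of_mem_of_mem {l₁ l₂ : List ℕ} (h₁ : l₁ ∈ blockList) (h₂ : l₂ ∈ blockList)
    {p q : Fin 24} (hpq : p ≠ q) (hp₁ : p ∈ toBlock l₁) (hq₁ : q ∈ toBlock l₁)
    (hp₂ : p ∈ toBlock l₂) (hq₂ : q ∈ toBlock l₂) : l₁ = l₂ := by
  rw [mem_toBlock] at *
  exact (blockList_inter l₁ h₁ l₂ h₂).resolve_right fun h =>
    hpq (Fin.ext (h p.val hp₁ hp₂ q.val hq₁ hq₂))

lemma blocks_isPacking : IsPacking blocks := by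
  constructor
  · intro b hb
    obtain ⟨l, hl, rfl⟩ := mem_blocks.mp hb
    exact card_toBlock l hl
  · intro p q hpq b₁ hb₁ b₂ hb₂ hp₁ hq₁ hp₂ hq₂
    obtain ⟨l₁, h₁, rfl⟩ := mem_blocks.mp hb₁
    obtain ⟨l₂, h₂, rfl⟩ := mem_blocks.mp hb₂
    rw [eq_of_mem_of_mem h₁ h₂ hpq hp₁ hq₁ hp₂ hq₂]

lemma blocks_card : blocks.card = 42 := by
  have hnodup : blockList.Nodup := by decide +kernel
  have hmap : (blockList.map toBlock).Nodup := by
    refine List.Nodup.map_on (fun l₁ h₁ l₂ h₂ heq => ?_) hnodup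
    -- Two lists with the same 4-element block share two distinct points.
    obtain ⟨p, hp, q, hq, hpq⟩ := Finset.one_lt_card.mp
      (show 1 < (toBlock l₁).card by rw [card_toBlock l₁ h₁]; norm_num)
    exact eq_of_mem_of_mem h₁ h₂ hpq hp hq (heq ▸ hp) (heq ▸ hq)
  rw [blocks, List.toFinset_card_of_nodup hmap, List.length_map]
  decide

lemma leaveAdj_blocks (p q : Fin 24) :
    LeaveAdj blocks p q ↔ p ≠ q ∧ ∀ l ∈ blockList, ¬ (p.val ∈ l ∧ q.val ∈ l) := by
  simp [LeaveAdj, mem_blocks, mem_toBlock]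

/-- The lengths are nonzero, so every `ZMod (L.get i)` is a finite type and the quantifiers over
the vertices of the cycles are decidable. -/
instance cycleLength_neZero (i : Fin [3, 3, 3, 3, 3, 3, 6].length) :
    NeZero ([3, 3, 3, 3, 3, 3, 6].get i) :=
  ⟨by revert i; decide⟩

lemma blocks_leave : LeaveIsCycleType blocks [3, 3, 3, 3, 3, 3, 6] := by
  refine ⟨fun i k => cycleVertex i.val k.val, ⟨?_, ?_⟩, ?_⟩
  · unfold Function.Injective
    decide +kernel
  · unfold Function.Surjective
    decide +kernel
  · intro p q
    rw [leaveAdj_blocks]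
    -- The two directions are evaluated separately, the converse only at the 24 cycle edges.
    constructor
    · revert p q
      decide +kernel
    · rintro ⟨i, k, ⟨rfl, rfl⟩ | ⟨rfl, rfl⟩⟩
      all_goals
        revert i k
        decide +kernel

/-- There is a 2-(24,4,1) packing with 42 blocks whose leave is a vertex-disjoint
union of cycles of lengths [3, 3, 3, 3, 3, 3, 6], covering all 24 points. -/
theorem exists_max_packing_with_leave_type :
    ∃ B : Finset (Finset (Fin 24)), IsPacking B ∧ B.card = 42 ∧
      LeaveIsCycleType B [3, 3, 3, 3, 3, 3, 6] :=
  ⟨blocks, blocks_isPacking, blocks_card, blocks_leave⟩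
end
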